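/- arXiv:2208.05078 — 2 statements merged into one kernel-verified Lean document; each statement's English description precedes it below -/
import Mathlib

section
/- Let λ = 3 log(2)²/π². For each dimension s ≥ 1 there exists a constant C > 0 (depending on s) such that, as m → ∞, |{𝐤 ∈ ℕ₀^s ∖ {0} : ‖𝛋‖₁ ≤ λm²/s}| ∼ C · 2^m/√m, i.e. the ratio of the two sides tends to 1. -/
open MeasureTheory ProbabilityTheory
open scoped ENNReal

namespace MedianQMC


/-- The set of 0-indexed positions of nonzero binary digits of `k`
(so `κ`, the 1-indexed set from the paper, is the image of this under `·+1`). -/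
def bitFinset (k : ℕ) : Finset ℕ := (Finset.range (k+1)).filter (fun i => k.testBit i)

/-- `‖κ‖₁ = ∑_{ℓ∈κ} ℓ` for the 1-indexed digit set `κ` of `k`. -/
def norm1 (k : ℕ) : ℕ := ∑ i ∈ bitFinset k, (i+1)

/-- `‖𝛋‖₁`. -/
def norm1Vec {s : ℕ} (k : Fin s → ℕ) : ℕ := ∑ j, norm1 (k j)

/-- `‖𝛋‖₀`, the total number of nonzero binary digits. -/
def norm0Vec {s : ℕ} (k : Fin s → ℕ) : ℕ := ∑ j, (bitFinset (k j)).card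

/-- `‖⌈𝛋⌉‖₁`; note `⌈κ_j⌉ = Nat.size (k j)`. -/
def ceilSum {s : ℕ} (k : Fin s → ℕ) : ℕ := ∑ j, Nat.size (k j)

/-- the support `s(𝐤)`. -/
def supp {s : ℕ} (k : Fin s → ℕ) : Finset (Fin s) := Finset.univ.filter (fun j => k j ≠ 0)

/-- Row `i` (0-indexed; paper row `i+1`) of `C j`, as a vector, `0` if out of range. -/
def rowOf {s m : ℕ} (C : Fin s → Matrix (Fin m) (Fin m) (ZMod 2)) (j : Fin s) (i : ℕ) :
    Fin m → ZMod 2 :=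
  fun c => if h : i < m then C j ⟨i, h⟩ c else 0

/-- The row space of the stacked matrix `C^{(q)}` consisting of the first `q j` rows of each `C j`. -/
def rowSpace {s m : ℕ} (C : Fin s → Matrix (Fin m) (Fin m) (ZMod 2)) (q : Fin s → ℕ) :
    Submodule (ZMod 2) (Fin m → ZMod 2) :=
  Submodule.span (ZMod 2) {v | ∃ j i, i < q j ∧ v = rowOf C j i}

/-- The rank of the stacked matrix `C^{(q)}`. -/
noncomputable def stackRank {s m : ℕ} (C : Fin s → Matrix (Fin m) (Fin m) (ZMod 2))
    (q : Fin s → ℕ) : ℕ :=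
  Module.finrank (ZMod 2) (rowSpace C q)

/-- `C₁,…,C_s` generate a digital `(t,m,s)`-net in base 2: every stacked matrix `C^{(q)}`
with `∑ q j = m - t` has full row rank `m - t`.  (Note each row of `C^{(q)}` is a genuine
row since `q j ≤ m - t ≤ m` automatically.) -/
def IsDigitalNet {s m : ℕ} (t : ℕ) (C : Fin s → Matrix (Fin m) (Fin m) (ZMod 2)) : Prop :=
  ∀ q : Fin s → ℕ, (∑ j, q j) = m - t → stackRank C q = m - t

/-- structural constraints of a linear scramble matrix with rows indexed by `ℕ`
(0-indexed; paper row `ℓ` is row `ℓ-1` here): ones on the diagonal, zeros above it. -/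
def IsLinearScramble {s m : ℕ} (M : Fin s → ℕ → Fin m → ZMod 2) : Prop :=
  ∀ j : Fin s, ∀ r : Fin m, M j (r : ℕ) r = 1 ∧ ∀ ℓ : ℕ, ℓ < (r : ℕ) → M j ℓ r = 0

/-- The condition `∑_{j=1}^s k⃗_jᵀ M_j C_j = 0`. -/
def ZeroCond {s m : ℕ} (C : Fin s → Matrix (Fin m) (Fin m) (ZMod 2))
    (M : Fin s → ℕ → Fin m → ZMod 2) (k : Fin s → ℕ) : Prop :=
  ∀ c : Fin m, (∑ j, ∑ i ∈ bitFinset (k j), ∑ r : Fin m, M j i r * C j r c) = 0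

/-- index type for the free (random) entries of the scramble matrices: entries strictly
below the diagonal, i.e. with column index `< ` row index. -/
def FreeIdx (s m : ℕ) : Type := {p : Fin s × ℕ × Fin m // (p.2.2 : ℕ) < p.2.1}

/-- index type for all random bits of a scramble-with-digital-shift. -/
def ScrIdx (s m : ℕ) : Type := FreeIdx s m ⊕ (Fin s × ℕ)

variable {Ω : Type*}

/-- the family of free entries of the random matrices. -/
def freeVar {s m : ℕ} (M : Ω → Fin s → ℕ → Fin m → ZMod 2) : FreeIdx s m → Ω → ZMod 2 :=
  fun p ω => M ω p.1.1 p.1.2.1 p.1.2.2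

/-- the family of all random bits of a scramble-with-digital-shift. -/
def scrVar {s m : ℕ} (M : Ω → Fin s → ℕ → Fin m → ZMod 2)
    (D : Ω → Fin s → ℕ → ZMod 2) : ScrIdx s m → Ω → ZMod 2
  | Sum.inl p => freeVar M p
  | Sum.inr q => fun ω => D ω q.1 q.2

/-- `x = Σ_{ℓ≥1} 2^{−ℓ} y_ℓ` (here `y` is 0-indexed). -/
noncomputable def coordI (y : ℕ → ZMod 2) : ℝ := ∑' ℓ : ℕ, ((y ℓ).val : ℝ) / 2 ^ (ℓ + 1)

/-- finite-precision coordinate `x = Σ_{ℓ=1}^E 2^{−ℓ} y_ℓ`. -/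
noncomputable def coordF (E : ℕ) (y : ℕ → ZMod 2) : ℝ :=
  ∑ ℓ ∈ Finset.range E, ((y ℓ).val : ℝ) / 2 ^ (ℓ + 1)

/-- digit string `M_j C_j ī + D_j` of the scrambled point `x_{ij}`. -/
def scrDigits {s m : ℕ} (C : Fin s → Matrix (Fin m) (Fin m) (ZMod 2))
    (M : Fin s → ℕ → Fin m → ZMod 2) (D : Fin s → ℕ → ZMod 2) (i : ℕ) (j : Fin s) :
    ℕ → ZMod 2 :=
  fun ℓ => (∑ r : Fin m, M j ℓ r * ∑ c : Fin m, C j r c *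
      (if i.testBit (c : ℕ) then 1 else 0)) + D j ℓ

/-- infinite-precision estimator `μ̂_∞ = 2^{-m} ∑_{i=0}^{2^m-1} f(x_i)`. -/
noncomputable def estInf {s m : ℕ} (f : (Fin s → ℝ) → ℝ)
    (C : Fin s → Matrix (Fin m) (Fin m) (ZMod 2))
    (M : Fin s → ℕ → Fin m → ZMod 2) (D : Fin s → ℕ → ZMod 2) : ℝ :=
  ((2 : ℝ) ^ m)⁻¹ * ∑ i ∈ Finset.range (2 ^ m), f (fun j => coordI (scrDigits C M D i j))

/-- precision-`E` estimator `μ̂_E`. -/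
noncomputable def estE {s m : ℕ} (E : ℕ) (f : (Fin s → ℝ) → ℝ)
    (C : Fin s → Matrix (Fin m) (Fin m) (ZMod 2))
    (M : Fin s → ℕ → Fin m → ZMod 2) (D : Fin s → ℕ → ZMod 2) : ℝ :=
  ((2 : ℝ) ^ m)⁻¹ * ∑ i ∈ Finset.range (2 ^ m), f (fun j => coordF E (scrDigits C M D i j))

/-- half-open unit cube `[0,1)^s`. -/
def cube (s : ℕ) : Set (Fin s → ℝ) := Set.univ.pi fun _ => Set.Ico (0:ℝ) 1

/-- closed unit cube `[0,1]^s`. -/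
def cubeC (s : ℕ) : Set (Fin s → ℝ) := Set.univ.pi fun _ => Set.Icc (0:ℝ) 1

/-- `ℓ`-th (0-indexed; paper `ℓ+1`) binary digit of `x ∈ [0,1)`, using the expansion ending
in zeros for dyadic rationals. -/
noncomputable def rdigit (x : ℝ) (i : ℕ) : ℕ := (⌊x * 2 ^ (i+1)⌋).toNat % 2

/-- Walsh function `wal_k`. -/
noncomputable def walsh (k : ℕ) (x : ℝ) : ℝ := (-1 : ℝ) ^ (∑ i ∈ bitFinset k, rdigit x i)

/-- multivariate Walsh function `wal_𝐤`. -/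
noncomputable def walshVec {s : ℕ} (k : Fin s → ℕ) (x : Fin s → ℝ) : ℝ :=
  ∏ j, walsh (k j) (x j)

/-- Walsh coefficient `f̂(𝐤)`. -/
noncomputable def fhat {s : ℕ} (f : (Fin s → ℝ) → ℝ) (k : Fin s → ℕ) : ℝ :=
  ∫ x in cube s, f x * walshVec k x

/-- the sign `(−1)^{Σ_j k⃗_jᵀ D_j}`. -/
noncomputable def walshSign {s : ℕ} (D : Fin s → ℕ → ZMod 2) (k : Fin s → ℕ) : ℝ :=
  (-1 : ℝ) ^ (∑ j, ∑ i ∈ bitFinset (k j), (D j i).val)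

/-- the constant `λ = 3 log(2)²/π²`. -/
noncomputable def lam : ℝ := 3 * Real.log 2 ^ 2 / Real.pi ^ 2

/-- the `i`-th smallest (0-indexed) of the values `v`. -/
noncomputable def orderStat {n : ℕ} (v : Fin n → ℝ) (i : ℕ) : ℝ :=
  (((List.ofFn v).mergeSort fun a b => @decide (a ≤ b) (Classical.propDecidable _)).getD i 0)

end MedianQMC


namespace MedianQMC
open Finset in
lemma bitFinset_eq (k : ℕ) : bitFinset k = Finset.equivBitIndices k := by
  ext i
  simp only [bitFinset, Finset.mem_filter, Finset.mem_range, Finset.equivBitIndices_apply,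
    List.mem_toFinset, Nat.mem_bitIndices]
  constructor
  · exact fun h => h.2
  · intro h
    refine ⟨?_, h⟩
    have := Nat.ge_two_pow_of_testBit h
    have := @Nat.lt_two_pow_self i
    omega

noncomputable def gen (L : ℕ) (z : ℂ) : ℂ :=
  ∏ i ∈ Finset.range L, (1 + Complex.exp (-((i : ℂ) + 1) * z))

def pnorm {s : ℕ} (p : Fin s → Finset ℕ) : ℕ := ∑ j, ∑ i ∈ p j, (i + 1)

def boxSet (s L : ℕ) : Finset (Fin s → Finset ℕ) :=
  Fintype.piFinset (fun _ => (Finset.range L).powerset)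

lemma gen_pow (s L : ℕ) (z : ℂ) :
    gen L z ^ s = ∑ p ∈ boxSet s L, Complex.exp (-(pnorm p : ℂ) * z) := by
  have h1 : gen L z ^ s = ∏ _j : Fin s, ∑ t ∈ (Finset.range L).powerset,
      ∏ i ∈ t, Complex.exp (-((i : ℂ) + 1) * z) := by
    rw [← Finset.prod_one_add]
    simp [gen]
  rw [h1, Finset.prod_univ_sum]
  refine Finset.sum_congr rfl fun p _ => ?_
  simp_rw [← Complex.exp_sum]
  congr 1
  simp only [pnorm]
  push_cast
  rw [neg_mul, Finset.sum_mul, ← Finset.sum_neg_distrib]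
  refine Finset.sum_congr rfl fun j _ => ?_
  rw [Finset.sum_mul, ← Finset.sum_neg_distrib]
  refine Finset.sum_congr rfl fun j _ => ?_
  ring

lemma ncard_eq (s N L : ℕ) (h : N ≤ L) :
    {k : Fin s → ℕ | norm1Vec k ≤ N}.ncard = ((boxSet s L).filter (fun p => pnorm p ≤ N)).card := by
  rw [← Set.ncard_coe_finset]
  let e : (Fin s → ℕ) ≃ (Fin s → Finset ℕ) := Equiv.piCongrRight (fun _ => Finset.equivBitIndices)
  rw [← Set.ncard_image_of_injective _ e.injective]
  congr 1
  have he : ∀ k, pnorm (e k) = norm1Vec k := by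
    intro k
    simp only [pnorm, norm1Vec, norm1, bitFinset_eq]
    rfl
  ext p
  simp only [Set.mem_image, Set.mem_ofPred_eq, Finset.coe_filter]
  constructor
  · rintro ⟨k, hk, rfl⟩
    rw [he]
    refine ⟨?_, hk⟩
    simp only [boxSet, Fintype.mem_piFinset, Finset.mem_powerset]
    intro j i hi
    rw [Finset.mem_range]
    have h1 : i + 1 ≤ pnorm (e k) := by
      unfold pnorm
      calc i + 1 ≤ ∑ i ∈ e k j, (i + 1) :=
            Finset.single_le_sum (f := fun i => i + 1) (fun _ _ => Nat.zero_le _) hi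
        _ ≤ _ := Finset.single_le_sum (f := fun j => ∑ i ∈ e k j, (i + 1))
            (fun _ _ => Nat.zero_le _) (Finset.mem_univ j)
    rw [he] at h1
    omega
  · rintro ⟨_, hp⟩
    refine ⟨e.symm p, ?_, by simp⟩
    rw [← he]; simpa using hp

lemma int_exp_int (β : ℝ) (j n : ℕ) :
    ∫ θ in (-Real.pi)..Real.pi, Complex.exp ((j : ℂ) * (β + θ * Complex.I)) *
      Complex.exp (-(n : ℂ) * (β + θ * Complex.I)) = if j = n then (2 * Real.pi : ℂ) else 0 := by
  have h1 : ∀ θ : ℝ, Complex.exp ((j : ℂ) * (β + θ * Complex.I)) *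
      Complex.exp (-(n : ℂ) * (β + θ * Complex.I)) =
      Complex.exp (((j : ℂ) - n) * β) * Complex.exp ((((j : ℂ) - n) * Complex.I) * θ) := by
    intro θ
    rw [← Complex.exp_add, ← Complex.exp_add]
    congr 1; ring
  simp_rw [h1]
  rw [intervalIntegral.integral_const_mul]
  split_ifs with h
  · subst h
    simp
    ring
  · have hne : ((j : ℂ) - n) * Complex.I ≠ 0 := by
      refine mul_ne_zero (sub_ne_zero.mpr ?_) Complex.I_ne_zero
      exact_mod_cast h
    rw [integral_exp_mul_complex hne]
    have : Complex.exp (((j : ℂ) - n) * Complex.I * (Real.pi : ℝ)) =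
        Complex.exp (((j : ℂ) - n) * Complex.I * ((-Real.pi : ℝ) : ℂ)) := by
      rw [Complex.exp_eq_exp_iff_exists_int]
      refine ⟨(j : ℤ) - n, ?_⟩
      push_cast; ring
    rw [this]; simp

lemma count_integral (s N L : ℕ) (h : N ≤ L) (β : ℝ) :
    ∫ θ in (-Real.pi)..Real.pi,
      (∑ j ∈ Finset.range (N + 1), Complex.exp ((j : ℂ) * (β + θ * Complex.I))) *
        gen L (β + θ * Complex.I) ^ s
      = 2 * Real.pi * ({k : Fin s → ℕ | norm1Vec k ≤ N}.ncard : ℂ) := by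
  simp_rw [gen_pow, Finset.sum_mul_sum]
  rw [intervalIntegral.integral_finsetSum]
  swap
  · intro i _
    apply Continuous.intervalIntegrable
    fun_prop
  have : ∀ j ∈ Finset.range (N + 1), (∫ θ in (-Real.pi)..Real.pi, ∑ p ∈ boxSet s L,
      Complex.exp ((j : ℂ) * (β + θ * Complex.I)) *
      Complex.exp (-(pnorm p : ℂ) * (β + θ * Complex.I))) =
      ∑ p ∈ boxSet s L, if j = pnorm p then (2 * Real.pi : ℂ) else 0 := by
    intro j _
    rw [intervalIntegral.integral_finsetSum]
    · exact Finset.sum_congr rfl fun p _ => int_exp_int β j _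
    · intro i _
      apply Continuous.intervalIntegrable
      fun_prop
  rw [Finset.sum_congr rfl this, Finset.sum_comm, ncard_eq s N L h, Finset.card_filter]
  push_cast
  rw [Finset.mul_sum]
  refine Finset.sum_congr rfl fun p _ => ?_
  rw [Finset.sum_ite_eq']
  simp [Nat.lt_succ_iff]
end MedianQMC

namespace MedianQMC

lemma trap (f f' f'' : ℝ → ℂ) (a M : ℝ)
    (h1 : ∀ x ∈ Set.Icc a (a + 1), HasDerivAt f (f' x) x)
    (h2 : ∀ x ∈ Set.Icc a (a + 1), HasDerivAt f' (f'' x) x)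
    (hM : ∀ x ∈ Set.Icc a (a + 1), ‖f'' x‖ ≤ M) :
    ‖(f a + f (a + 1)) / 2 - ∫ t in a..(a + 1), f t‖ ≤ M := by
  have hI : Set.uIcc a (a + 1) = Set.Icc a (a + 1) := Set.uIcc_of_le (by linarith)
  have hc' : ContinuousOn f' (Set.uIcc a (a + 1)) := by
    rw [hI]; exact fun x hx => (h2 x hx).continuousAt.continuousWithinAt
  have key := intervalIntegral.integral_mul_deriv_eq_deriv_mul (a := a) (b := a + 1)
    (u := f) (u' := f') (v := fun t : ℝ => (t : ℂ) - a - 1 / 2) (v' := fun _ => 1)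
    (by rw [hI]; exact h1)
    (by
      intro x _
      simpa using ((Complex.ofRealCLM.hasDerivAt (x := x)).sub_const (a : ℂ)).sub_const (1 / 2 : ℂ))
    hc'.intervalIntegrable (by simp)
  simp only [mul_one] at key
  have h0 : ∫ t in a..(a + 1), f' a * ((t : ℂ) - a - 1 / 2) = 0 := by
    rw [intervalIntegral.integral_const_mul]
    have : ∫ t in a..(a + 1), ((t : ℂ) - a - 1 / 2) = 0 := by
      have h3 := intervalIntegral.integral_eq_sub_of_hasDerivAt (a := a) (b := a + 1)
        (f := fun t : ℝ => ((t : ℂ) - a - 1 / 2) ^ 2 / 2)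
        (f' := fun t : ℝ => ((t : ℂ) - a - 1 / 2)) (by
          intro x _
          have h4 := ((Complex.ofRealCLM.hasDerivAt (x := x)).sub_const (a : ℂ)).sub_const (1 / 2 : ℂ)
          refine ((h4.pow 2).div_const 2).congr_deriv ?_
          simp) (by
          apply Continuous.intervalIntegrable
          fun_prop)
      rw [h3]
      push_cast
      ring
    rw [this, mul_zero]
  have h5 : (f a + f (a + 1)) / 2 - ∫ t in a..(a + 1), f t
      = ∫ t in a..(a + 1), (f' t - f' a) * ((t : ℂ) - a - 1 / 2) := by
    have : ∫ t in a..(a + 1), (f' t - f' a) * ((t : ℂ) - a - 1 / 2)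
        = (∫ t in a..(a + 1), f' t * ((t : ℂ) - a - 1 / 2)) - 
          ∫ t in a..(a + 1), f' a * ((t : ℂ) - a - 1 / 2) := by
      rw [← intervalIntegral.integral_sub]
      · simp_rw [sub_mul]
      · apply ContinuousOn.intervalIntegrable
        exact hc'.mul (by fun_prop)
      · apply Continuous.intervalIntegrable
        fun_prop
    rw [this, h0, key]
    push_cast
    ring
  rw [h5]
  have h6 := intervalIntegral.norm_integral_le_of_norm_le_const (a := a) (b := a + 1) (C := M)
    (f := fun t : ℝ => (f' t - f' a) * ((t : ℂ) - a - 1 / 2)) (by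
      intro x hx
      rw [Set.uIoc_of_le (by linarith)] at hx
      have hx' : x ∈ Set.Icc a (a + 1) := ⟨hx.1.le, hx.2⟩
      have ha : a ∈ Set.Icc a (a + 1) := ⟨le_rfl, by linarith⟩
      have h7 := Convex.norm_image_sub_le_of_norm_hasDerivWithin_le
        (fun x hx => (h2 x hx).hasDerivWithinAt) hM (convex_Icc a (a + 1)) ha hx'
      have hM0 : 0 ≤ M := (norm_nonneg _).trans (hM a ha)
      have h8 : ‖(x : ℂ) - a - 1 / 2‖ ≤ 1 := by
        have : (x : ℂ) - a - 1 / 2 = ((x - a - 1 / 2 : ℝ) : ℂ) := by push_cast; ring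
        rw [this, Complex.norm_real, Real.norm_eq_abs, abs_le]
        constructor <;> linarith [hx.1, hx.2]
      have h9 : ‖x - a‖ ≤ 1 := by
        rw [Real.norm_eq_abs, abs_le]
        constructor <;> linarith [hx.1, hx.2]
      rw [norm_mul]
      calc _ ≤ (M * 1) * 1 := by
            gcongr
            exact h7.trans (by gcongr)
        _ = M := by ring)
  simpa using h6

noncomputable def HH (z : ℂ) (t : ℝ) : ℂ := Complex.log (1 + Complex.exp (-(t : ℂ) * z))

lemma norm_exp_neg (z : ℂ) (t : ℝ) : ‖Complex.exp (-(t : ℂ) * z)‖ = Real.exp (-t * z.re) := by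
  rw [Complex.norm_exp]; simp

lemma half_le_norm (z : ℂ) (him : |z.im| ≤ z.re) (t : ℝ) (ht : 0 ≤ t) :
    1 / 2 ≤ ‖1 + Complex.exp (-(t : ℂ) * z)‖ := by
  by_cases h : t * |z.im| ≤ Real.pi / 2
  · have h1 : 0 ≤ (Complex.exp (-(t : ℂ) * z)).re := by
      rw [Complex.exp_re]
      refine mul_nonneg (Real.exp_pos _).le (Real.cos_nonneg_of_mem_Icc ?_)
      have : |t * z.im| ≤ Real.pi / 2 := by rwa [abs_mul, abs_of_nonneg ht]
      rw [abs_le] at this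
      simp only [neg_mul, Complex.neg_im, Complex.mul_im, Complex.ofReal_re, Complex.ofReal_im]
      constructor <;> linarith [this.1, this.2]
    have h2 := Complex.re_le_norm (1 + Complex.exp (-(t : ℂ) * z))
    simp only [Complex.add_re, Complex.one_re] at h2
    linarith
  · push Not at h
    have h1 : 1 ≤ t * z.re := by
      have := mul_le_mul_of_nonneg_left him ht
      linarith [Real.pi_gt_three]
    have h2 : ‖Complex.exp (-(t : ℂ) * z)‖ ≤ 1 / 2 := by
      rw [norm_exp_neg]
      calc Real.exp (-t * z.re) ≤ Real.exp (-1) := by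
            apply Real.exp_le_exp.mpr; linarith
        _ ≤ 1 / 2 := by
            rw [Real.exp_neg, one_div]
            apply inv_anti₀ (by norm_num)
            linarith [Real.add_one_le_exp 1]
    have h3 := norm_sub_norm_le (1 : ℂ) (-Complex.exp (-(t : ℂ) * z))
    rw [norm_neg, sub_neg_eq_add, norm_one] at h3
    linarith

lemma slit (z : ℂ) (hz : 0 < z.re) (t : ℝ) (ht : 0 ≤ t) :
    1 + Complex.exp (-(t : ℂ) * z) ∈ Complex.slitPlane := by
  rcases ht.eq_or_lt with rfl | ht
  · left; simp
  · left
    have h1 : ‖Complex.exp (-(t : ℂ) * z)‖ < 1 := by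
      rw [norm_exp_neg, Real.exp_lt_one_iff]
      nlinarith
    have h2 := Complex.abs_re_le_norm (Complex.exp (-(t : ℂ) * z))
    have h3 := neg_abs_le (Complex.exp (-(t : ℂ) * z)).re
    simp only [Complex.add_re, Complex.one_re]
    linarith

noncomputable def HH1 (z : ℂ) (t : ℝ) : ℂ :=
  (-z * Complex.exp (-(t : ℂ) * z)) / (1 + Complex.exp (-(t : ℂ) * z))
noncomputable def HH2 (z : ℂ) (t : ℝ) : ℂ :=
  (z ^ 2 * Complex.exp (-(t : ℂ) * z)) / (1 + Complex.exp (-(t : ℂ) * z)) ^ 2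

lemma hasDeriv_exp (z : ℂ) (t : ℝ) :
    HasDerivAt (fun t : ℝ => Complex.exp (-(t : ℂ) * z)) (-z * Complex.exp (-(t : ℂ) * z)) t := by
  have h0 : HasDerivAt (fun t : ℝ => -(t : ℂ) * z) (-1 * z) t := by
    simpa using ((Complex.ofRealCLM.hasDerivAt (x := t)).neg).mul_const z
  exact h0.cexp.congr_deriv (by ring)

lemma hasDeriv_HH (z : ℂ) (hz : 0 < z.re) (t : ℝ) (ht : 0 ≤ t) :
    HasDerivAt (HH z) (HH1 z t) t := by
  exact ((hasDeriv_exp z t).const_add 1).clog_real (slit z hz t ht)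

lemma hasDeriv_HH1 (z : ℂ) (hz : 0 < z.re) (t : ℝ) (ht : 0 ≤ t) :
    HasDerivAt (HH1 z) (HH2 z t) t := by
  have h := ((hasDeriv_exp z t).const_mul (-z)).div ((hasDeriv_exp z t).const_add 1)
    (Complex.slitPlane_ne_zero (slit z hz t ht))
  refine HasDerivAt.congr_deriv h ?_
  unfold HH2
  ring

lemma norm_HH2 (z : ℂ) (hz : 0 < z.re) (him : |z.im| ≤ z.re) (t : ℝ) (ht : 0 ≤ t) :
    ‖HH2 z t‖ ≤ 8 * z.re ^ 2 * Real.exp (-t * z.re) := by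
  unfold HH2
  rw [norm_div, norm_mul, norm_pow, norm_pow, norm_exp_neg]
  have h1 := half_le_norm z him t ht
  have h2 : ‖z‖ ^ 2 ≤ 2 * z.re ^ 2 := by
    rw [← Complex.normSq_eq_norm_sq, Complex.normSq_apply]
    have := sq_le_sq' (by linarith [abs_nonneg z.im]) him
    rw [sq_abs] at this
    nlinarith
  have h3 : (1 / 4 : ℝ) ≤ ‖1 + Complex.exp (-(t : ℂ) * z)‖ ^ 2 := by nlinarith
  rw [div_le_iff₀ (by linarith)]
  have he := Real.exp_pos (-t * z.re)
  calc ‖z‖ ^ 2 * Real.exp (-t * z.re) ≤ (2 * z.re ^ 2) * Real.exp (-t * z.re) := by gcongr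
    _ = 8 * z.re ^ 2 * Real.exp (-t * z.re) * (1 / 4) := by ring
    _ ≤ _ := by gcongr

lemma hasSum_alt : HasSum (fun n : ℕ => (-1 : ℝ) ^ (n + 1) / (n : ℝ) ^ 2) (Real.pi ^ 2 / 12) := by
  have h := hasSum_zeta_two
  have he : HasSum (fun n : ℕ => (1 : ℝ) / ((2 * n : ℕ) : ℝ) ^ 2) (Real.pi ^ 2 / 24) := by
    have e1 : (fun n : ℕ => (1 : ℝ) / ((2 * n : ℕ) : ℝ) ^ 2) =
        fun n : ℕ => (1 / 4 : ℝ) * (1 / (n : ℝ) ^ 2) := by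
      ext n; push_cast
      rw [mul_pow]; ring
    have e2 : Real.pi ^ 2 / 24 = (1 / 4 : ℝ) * (Real.pi ^ 2 / 6) := by ring
    rw [e1, e2]
    exact h.mul_left _
  have ho : HasSum (fun n : ℕ => (1 : ℝ) / ((2 * n + 1 : ℕ) : ℝ) ^ 2) (Real.pi ^ 2 / 8) := by
    have hs : Summable (fun n : ℕ => (1 : ℝ) / ((2 * n + 1 : ℕ) : ℝ) ^ 2) :=
      h.summable.comp_injective (i := fun n : ℕ => 2 * n + 1) (fun a b hab => by simpa using hab)
    have h2 := (HasSum.even_add_odd (f := fun n : ℕ => (1 : ℝ) / (n : ℝ) ^ 2) he hs.hasSum).unique h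
    have h3 := hs.hasSum
    have e : Real.pi ^ 2 / 8 = ∑' n : ℕ, (1 : ℝ) / ((2 * n + 1 : ℕ) : ℝ) ^ 2 := by linarith
    rw [e]
    exact h3
  have e : Real.pi ^ 2 / 12 = -(Real.pi ^ 2 / 24) + Real.pi ^ 2 / 8 := by ring
  rw [e]
  refine HasSum.even_add_odd (f := fun n : ℕ => (-1 : ℝ) ^ (n + 1) / (n : ℝ) ^ 2)
    (m := -(Real.pi ^ 2 / 24)) (m' := Real.pi ^ 2 / 8) ?_ ?_
  · have e3 : (fun n : ℕ => (-1 : ℝ) ^ (2 * n + 1) / ((2 * n : ℕ) : ℝ) ^ 2) =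
        fun n : ℕ => -((1 : ℝ) / ((2 * n : ℕ) : ℝ) ^ 2) := by
      ext n
      rw [pow_succ, pow_mul, neg_one_sq, one_pow]; ring
    rw [e3]
    exact he.neg
  · have e3 : (fun n : ℕ => (-1 : ℝ) ^ (2 * n + 1 + 1) / ((2 * n + 1 : ℕ) : ℝ) ^ 2) =
        fun n : ℕ => ((1 : ℝ) / ((2 * n + 1 : ℕ) : ℝ) ^ 2) := by
      ext n
      rw [pow_succ, pow_succ, pow_mul, neg_one_sq, one_pow]; ring
    rw [e3]
    exact ho

lemma integral_HH (z : ℂ) (hz : 0 < z.re) :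
    ∫ t in Set.Ioi (0 : ℝ), HH z t = (Real.pi : ℂ) ^ 2 / (12 * z) := by
  have hz0 : z ≠ 0 := by rintro rfl; simp at hz
  let F : ℕ → ℝ → ℂ := fun n t => (-1) ^ (n + 1) / (n : ℂ) * Complex.exp ((-(n : ℂ) * z) * t)
  have hre : ∀ n : ℕ, n ≠ 0 → (-(n : ℂ) * z).re < 0 := by
    intro n hn
    have : (0 : ℝ) < n := by positivity
    simp; positivity
  have hFint : ∀ n, MeasureTheory.IntegrableOn (F n) (Set.Ioi 0) := by
    intro n
    rcases eq_or_ne n 0 with rfl | hn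
    · simp [F]
    · exact (integrableOn_exp_mul_complex_Ioi (hre n hn) 0).const_mul _
  have hF : ∀ n, ∫ t in Set.Ioi (0 : ℝ), F n t = ((-1 : ℝ) ^ (n + 1) / (n : ℝ) ^ 2 : ℝ) / z := by
    intro n
    rcases eq_or_ne n 0 with rfl | hn
    · simp [F]
    · simp only [F]
      rw [MeasureTheory.integral_const_mul, integral_exp_mul_complex_Ioi (hre n hn)]
      have : (n : ℂ) ≠ 0 := by exact_mod_cast hn
      push_cast
      simp
      field_simp
  have hnF : ∀ n, ∫ t in Set.Ioi (0 : ℝ), ‖F n t‖ = (1 / (n : ℝ) ^ 2) / z.re := by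
    intro n
    rcases eq_or_ne n 0 with rfl | hn
    · simp [F]
    · have h1 : ∀ t : ℝ, ‖F n t‖ = 1 / (n : ℝ) * Real.exp (-(n * z.re) * t) := by
        intro t
        simp only [F]
        rw [norm_mul, norm_div, norm_pow, norm_neg, norm_one, one_pow, Complex.norm_natCast,
          Complex.norm_exp]
        simp
      have hn' : (0 : ℝ) < n := by positivity
      simp_rw [h1]
      rw [MeasureTheory.integral_const_mul, integral_exp_mul_Ioi (by nlinarith)]
      simp
      field_simp
  have h := MeasureTheory.hasSum_integral_of_summable_integral_norm
    (μ := MeasureTheory.volume.restrict (Set.Ioi (0 : ℝ))) (F := F) hFint (by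
      simp_rw [hnF]
      exact hasSum_zeta_two.summable.div_const _)
  have h2 : ∫ t in Set.Ioi (0 : ℝ), HH z t = ∫ t in Set.Ioi (0 : ℝ), ∑' n, F n t := by
    apply MeasureTheory.setIntegral_congr_fun measurableSet_Ioi
    intro t ht
    have h1 : ‖Complex.exp (-(t : ℂ) * z)‖ < 1 := by
      rw [norm_exp_neg, Real.exp_lt_one_iff]
      have : 0 < t := ht
      nlinarith
    have h3 := Complex.hasSum_taylorSeries_log h1
    simp only [HH]
    rw [← h3.tsum_eq]
    congr 1
    ext n
    simp only [F]
    rw [← Complex.exp_nat_mul]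
    have : (n : ℂ) * (-(t : ℂ) * z) = -(n : ℂ) * z * t := by ring
    rw [this]; ring
  rw [h2]
  simp_rw [hF] at h
  have h4 := (Complex.hasSum_ofReal.mpr hasSum_alt).div_const z
  rw [h.unique h4]
  push_cast
  field_simp

lemma norm_HH (z : ℂ) (t : ℝ) (h : Real.exp (-t * z.re) ≤ 1 / 2) :
    ‖HH z t‖ ≤ 3 / 2 * Real.exp (-t * z.re) := by
  rw [← norm_exp_neg] at h ⊢
  exact Complex.norm_log_one_add_half_le_self h

lemma gen_asymp (z : ℂ) (L : ℕ) (hz : 0 < z.re) (hz2 : z.re ≤ 1 / 2) (him : |z.im| ≤ z.re)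
    (hL : Real.exp (-L * z.re) ≤ z.re ^ 2) :
    ∃ E : ℂ, ‖E‖ ≤ 20 * z.re ∧
      gen L z = Complex.exp ((Real.pi : ℂ) ^ 2 / (12 * z) - Complex.log 2 / 2 + E) := by
  have hcont : ContinuousOn (HH z) (Set.Ici 0) :=
    fun t ht => (hasDeriv_HH z hz t ht).continuousAt.continuousWithinAt
  have hL0 : (0 : ℝ) ≤ L := Nat.cast_nonneg L
  have hexpint : MeasureTheory.IntegrableOn (fun t : ℝ => 3 / 2 * Real.exp (-t * z.re))
      (Set.Ioi (L : ℝ)) := by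
    have := (integrableOn_exp_mul_Ioi (a := -z.re) (by linarith) (L : ℝ)).const_mul (3 / 2)
    have e : (fun t : ℝ => 3 / 2 * Real.exp (-t * z.re)) =
        fun t : ℝ => 3 / 2 * Real.exp (-z.re * t) := by
      ext t; ring_nf
    rw [e]
    exact this
  have hbd : ∀ t : ℝ, t ∈ Set.Ioi (L : ℝ) → ‖HH z t‖ ≤ 3 / 2 * Real.exp (-t * z.re) := by
    intro t ht
    have ht' : (L : ℝ) < t := ht
    apply norm_HH
    calc Real.exp (-t * z.re) ≤ Real.exp (-L * z.re) := by
          apply Real.exp_le_exp.mpr; nlinarith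
      _ ≤ z.re ^ 2 := hL
      _ ≤ 1 / 2 := by nlinarith
  have hintL : MeasureTheory.IntegrableOn (HH z) (Set.Ioi (L : ℝ)) := by
    refine MeasureTheory.Integrable.mono' hexpint ?_ ?_
    · apply ContinuousOn.aestronglyMeasurable _ measurableSet_Ioi
      exact hcont.mono (fun t ht => hL0.trans (le_of_lt ht))
    · exact (MeasureTheory.ae_restrict_iff' measurableSet_Ioi).mpr (Filter.Eventually.of_forall hbd)
  have hintIoc : MeasureTheory.IntegrableOn (HH z) (Set.Ioc 0 (L : ℝ)) := by
    have : MeasureTheory.IntegrableOn (HH z) (Set.Icc 0 (L : ℝ)) :=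
      (hcont.mono (fun t ht => ht.1)).integrableOn_Icc
    exact this.mono_set Set.Ioc_subset_Icc_self
  have hint0 : MeasureTheory.IntegrableOn (HH z) (Set.Ioi (0 : ℝ)) := by
    rw [← Set.Ioc_union_Ioi_eq_Ioi hL0]
    exact hintIoc.union hintL
  have hsplit := intervalIntegral.integral_interval_add_Ioi hint0 hintL
  rw [integral_HH z hz] at hsplit
  have htail : ‖∫ t in Set.Ioi (L : ℝ), HH z t‖ ≤ 3 / 2 * z.re := by
    have h1 := MeasureTheory.norm_integral_le_of_norm_le hexpint
      ((MeasureTheory.ae_restrict_iff' measurableSet_Ioi).mpr (Filter.Eventually.of_forall hbd))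
    refine h1.trans ?_
    have h2 : ∀ t : ℝ, 3 / 2 * Real.exp (-t * z.re) = 3 / 2 * Real.exp (-z.re * t) := by
      intro t; ring_nf
    simp_rw [h2]
    rw [MeasureTheory.integral_const_mul, integral_exp_mul_Ioi (by linarith)]
    rw [neg_div_neg_eq]
    gcongr
    rw [div_le_iff₀ hz]
    calc Real.exp (-z.re * L) = Real.exp (-L * z.re) := by ring_nf
      _ ≤ z.re ^ 2 := hL
      _ = _ := by ring
  have hsumint := intervalIntegral.sum_integral_adjacent_intervals (f := HH z)
    (μ := MeasureTheory.volume) (a := fun n : ℕ => (n : ℝ)) (n := L) (by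
      intro k _
      apply ContinuousOn.intervalIntegrable
      apply hcont.mono
      rw [Set.uIcc_of_le (by push_cast; linarith)]
      intro t ht
      exact le_trans (Nat.cast_nonneg k) ht.1)
  simp only [Nat.cast_zero] at hsumint
  have htrap : ‖∑ k ∈ Finset.range L, ((HH z k + HH z ((k + 1 : ℕ) : ℝ)) / 2 -
      ∫ t in (k : ℝ)..((k + 1 : ℕ) : ℝ), HH z t)‖ ≤ 16 * z.re := by
    refine (norm_sum_le _ _).trans ?_
    have h1 : ∀ k ∈ Finset.range L, ‖(HH z k + HH z ((k + 1 : ℕ) : ℝ)) / 2 -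
        ∫ t in (k : ℝ)..((k + 1 : ℕ) : ℝ), HH z t‖ ≤ 8 * z.re ^ 2 * (Real.exp (-z.re)) ^ k := by
      intro k _
      have hk : (0 : ℝ) ≤ k := Nat.cast_nonneg k
      push_cast
      refine trap (HH z) (HH1 z) (HH2 z) k _
        (fun x hx => hasDeriv_HH z hz x (hk.trans hx.1))
        (fun x hx => hasDeriv_HH1 z hz x (hk.trans hx.1)) (fun x hx => ?_)
      refine (norm_HH2 z hz him x (hk.trans hx.1)).trans ?_
      rw [← Real.exp_nat_mul]
      refine mul_le_mul_of_nonneg_left (Real.exp_le_exp.mpr ?_) (by positivity)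
      nlinarith [hx.1]
    refine (Finset.sum_le_sum h1).trans ?_
    rw [← Finset.mul_sum]
    have hr : Real.exp (-z.re) ≤ 1 - z.re / 2 := by
      have h2 : Real.exp (-z.re) ≤ 1 / (1 + z.re) := by
        rw [Real.exp_neg, ← one_div]
        apply one_div_le_one_div_of_le (by linarith)
        linarith [Real.add_one_le_exp z.re]
      refine h2.trans ?_
      rw [div_le_iff₀ (by linarith)]
      nlinarith
    have h3 : ∑ k ∈ Finset.range L, Real.exp (-z.re) ^ k ≤ 2 / z.re := by
      have h4 := geom_sum_mul_neg (Real.exp (-z.re)) L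
      have h5 : 0 ≤ Real.exp (-z.re) ^ L := by positivity
      have h6 : 0 ≤ ∑ k ∈ Finset.range L, Real.exp (-z.re) ^ k :=
        Finset.sum_nonneg fun _ _ => by positivity
      rw [le_div_iff₀ hz]
      nlinarith
    calc 8 * z.re ^ 2 * ∑ k ∈ Finset.range L, Real.exp (-z.re) ^ k
        ≤ 8 * z.re ^ 2 * (2 / z.re) := by gcongr
      _ = 16 * z.re := by field_simp; ring
  have htel : ∑ k ∈ Finset.range L, (HH z k + HH z ((k + 1 : ℕ) : ℝ)) / 2
      = ∑ k ∈ Finset.range L, HH z ((k + 1 : ℕ) : ℝ) + (HH z 0 - HH z L) / 2 := by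
    have h1 := Finset.sum_range_sub (fun k : ℕ => HH z (k : ℝ)) L
    simp only [Nat.cast_zero] at h1
    rw [← neg_sub (HH z L), ← h1, ← Finset.sum_neg_distrib, Finset.sum_div,
      ← Finset.sum_add_distrib]
    refine Finset.sum_congr rfl fun k _ => ?_
    ring
  rw [Finset.sum_sub_distrib, htel, hsumint] at htrap
  have hH0 : HH z 0 = Complex.log 2 := by
    simp [HH]; norm_num
  have hHL : ‖HH z L‖ ≤ 3 / 2 * z.re := by
    refine (norm_HH z L (hL.trans (by nlinarith))).trans ?_
    gcongr
    exact hL.trans (by nlinarith)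
  have hgen : gen L z = Complex.exp (∑ k ∈ Finset.range L, HH z ((k + 1 : ℕ) : ℝ)) := by
    rw [Complex.exp_sum]
    refine Finset.prod_congr rfl fun k _ => ?_
    rw [HH, Complex.exp_log]
    · push_cast; rfl
    · exact Complex.slitPlane_ne_zero (slit z hz _ (Nat.cast_nonneg _))
  refine ⟨∑ k ∈ Finset.range L, HH z ((k + 1 : ℕ) : ℝ) -
    ((Real.pi : ℂ) ^ 2 / (12 * z) - Complex.log 2 / 2), ?_, ?_⟩
  · rw [hH0] at htrap
    rw [← hsplit]
    set S := ∑ k ∈ Finset.range L, HH z ((k + 1 : ℕ) : ℝ)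
    set A := ∫ t in (0 : ℝ)..L, HH z t
    set B := ∫ t in Set.Ioi (L : ℝ), HH z t
    have : S - (A + B - Complex.log 2 / 2) =
      (S + (Complex.log 2 - HH z L) / 2 - A) + (1 / 2) * HH z L - B := by ring
    rw [this]
    calc _ ≤ ‖S + (Complex.log 2 - HH z L) / 2 - A‖ + ‖(1 / 2) * HH z L‖ + ‖B‖ := by
          refine (norm_sub_le _ _).trans ?_
          gcongr
          exact norm_add_le _ _
      _ ≤ 16 * z.re + 1 / 2 * (3 / 2 * z.re) + 3 / 2 * z.re := by
          gcongr
          rw [norm_mul]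
          gcongr
          norm_num
      _ ≤ _ := by linarith
  · rw [hgen]; congr 1; ring
end MedianQMC

namespace MedianQMC

lemma factor_bound (ρ φ : ℝ) (h0 : 0 ≤ ρ) (h1 : ρ ≤ 1) (w : ℂ)
    (hre : w.re = ρ * Real.cos φ) (hn : ‖w‖ = ρ) :
    ‖1 + w‖ ≤ (1 + ρ) * Real.exp (-(ρ * (1 - Real.cos φ)) / 4) := by
  have hc := Real.cos_le_one φ
  have hsq : ‖1 + w‖ ^ 2 = (1 + ρ) ^ 2 - 2 * (ρ * (1 - Real.cos φ)) := by
    have h2 : w.re ^ 2 + w.im ^ 2 = ρ ^ 2 := by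
      rw [← hn, ← Complex.normSq_eq_norm_sq, Complex.normSq_apply]; ring
    rw [← Complex.normSq_eq_norm_sq, Complex.normSq_apply]
    simp only [Complex.add_re, Complex.one_re, Complex.add_im, Complex.one_im]
    rw [hre] at *
    nlinarith
  refine le_of_sq_le_sq ?_ (by positivity)
  rw [hsq, mul_pow, ← Real.exp_nat_mul]
  set q := ρ * (1 - Real.cos φ) with hq
  have hq0 : 0 ≤ q := mul_nonneg h0 (by linarith)
  have h3 := Real.add_one_le_exp (((2 : ℕ) : ℝ) * (-q / 4))
  have h4 : (1 + ρ) ^ 2 ≤ 4 := by nlinarith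
  calc (1 + ρ) ^ 2 - 2 * q ≤ (1 + ρ) ^ 2 * (((2 : ℕ) : ℝ) * (-q / 4) + 1) := by
        push_cast; nlinarith
    _ ≤ _ := by gcongr

lemma gen_bound0 (L : ℕ) (β θ : ℝ) (hβ : 0 ≤ β) :
    ‖gen L (β + θ * Complex.I)‖ ≤ ‖gen L β‖ * Real.exp (-(∑ ℓ ∈ Finset.range (L + 1),
      Real.exp (-β) ^ ℓ * (1 - Real.cos (ℓ * θ))) / 4) := by
  rw [Finset.sum_range_succ']
  simp only [Nat.cast_zero, zero_mul, Real.cos_zero, sub_self, mul_zero, add_zero]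
  unfold gen
  rw [norm_prod, norm_prod, ← Finset.sum_neg_distrib, Finset.sum_div, Real.exp_sum,
    ← Finset.prod_mul_distrib]
  refine Finset.prod_le_prod (fun _ _ => norm_nonneg _) fun i _ => ?_
  have e1 : Real.exp (-β) ^ (i + 1) = Real.exp (-((i : ℝ) + 1) * β) := by
    rw [← Real.exp_nat_mul]; push_cast; ring_nf
  have e2 : ‖1 + Complex.exp (-((i : ℂ) + 1) * β)‖ = 1 + Real.exp (-((i : ℝ) + 1) * β) := by
    have : 1 + Complex.exp (-((i : ℂ) + 1) * β) =
        ((1 + Real.exp (-((i : ℝ) + 1) * β) : ℝ) : ℂ) := by push_cast; rfl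
    rw [this, Complex.norm_real, Real.norm_of_nonneg (by positivity)]
  rw [e1, e2]
  apply factor_bound
  · positivity
  · rw [Real.exp_le_one_iff]
    have : (0 : ℝ) ≤ i := Nat.cast_nonneg i
    nlinarith
  · rw [Complex.exp_re]
    simp
    rw [← Real.cos_neg]
    ring_nf
  · rw [Complex.norm_exp]
    simp

lemma sum_lower (L : ℕ) (r θ u : ℝ) (hr0 : 1 / 2 ≤ r) (hr1 : r < 1)
    (hu : u = 2 * (1 - Real.cos θ)) :
    1 / (2 * (1 - r)) * (r * u / ((1 - r) ^ 2 + r * u)) - 2 * r ^ (L + 1) / (1 - r) ≤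
    ∑ ℓ ∈ Finset.range (L + 1), r ^ ℓ * (1 - Real.cos (ℓ * θ)) := by
  set w : ℂ := r * Complex.exp (θ * Complex.I) with hw
  have hwn : ‖w‖ = r := by
    rw [hw, norm_mul, Complex.norm_exp_ofReal_mul_I, Complex.norm_real, Real.norm_of_nonneg (by linarith)]
    ring
  have hwre : w.re = r * Real.cos θ := by
    rw [hw, Complex.exp_mul_I]; simp [Complex.cos_ofReal_re, Complex.sin_ofReal_im]
  have hpow : ∀ ℓ : ℕ, (w ^ ℓ).re = r ^ ℓ * Real.cos (ℓ * θ) := by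
    intro ℓ
    rw [hw, mul_pow, ← Complex.exp_nat_mul]
    have : (ℓ : ℂ) * (θ * Complex.I) = ((ℓ * θ : ℝ) : ℂ) * Complex.I := by push_cast; ring
    rw [this, ← Complex.ofReal_pow, Complex.re_ofReal_mul, Complex.exp_ofReal_mul_I_re]
  have hδ : 0 < 1 - r := by linarith
  have hd : 1 - r ≤ ‖1 - w‖ := by
    have := norm_sub_norm_le (1 : ℂ) w
    rwa [norm_one, hwn] at this
  have hne : 1 - w ≠ 0 := by
    intro h; rw [h, norm_zero] at hd; linarith
  have hu0 : 0 ≤ u := by rw [hu]; linarith [Real.cos_le_one θ]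
  have hsq : Complex.normSq (1 - w) = (1 - r) ^ 2 + r * u := by
    have h2 : w.re ^ 2 + w.im ^ 2 = r ^ 2 := by
      rw [← hwn, ← Complex.normSq_eq_norm_sq, Complex.normSq_apply]; ring
    rw [Complex.normSq_apply]
    simp only [Complex.sub_re, Complex.one_re, Complex.sub_im, Complex.one_im]
    rw [hu]
    rw [hwre] at *
    nlinarith
  have hQ : 0 < (1 - r) ^ 2 + r * u := by positivity
  -- geometric sums
  have g1 : ∑ ℓ ∈ Finset.range (L + 1), r ^ ℓ = (1 - r ^ (L + 1)) / (1 - r) := by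
    rw [eq_div_iff hδ.ne']; exact geom_sum_mul_neg r (L + 1)
  have g2 : ∑ ℓ ∈ Finset.range (L + 1), w ^ ℓ = (1 - w)⁻¹ - w ^ (L + 1) * (1 - w)⁻¹ := by
    have := geom_sum_mul_neg w (L + 1)
    rw [← eq_div_iff hne] at this
    rw [this]; ring
  have g3 : ∑ ℓ ∈ Finset.range (L + 1), r ^ ℓ * (1 - Real.cos (ℓ * θ)) =
      (1 - r ^ (L + 1)) / (1 - r) - ((1 - w)⁻¹ - w ^ (L + 1) * (1 - w)⁻¹).re := by
    rw [← g1, ← g2, Complex.re_sum, ← Finset.sum_sub_distrib]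
    refine Finset.sum_congr rfl fun ℓ _ => ?_
    rw [hpow]; ring
  rw [g3, Complex.sub_re]
  have g4 : -(r ^ (L + 1) / (1 - r)) ≤ (w ^ (L + 1) * (1 - w)⁻¹).re := by
    have h1 := Complex.abs_re_le_norm (w ^ (L + 1) * (1 - w)⁻¹)
    have h2 : ‖w ^ (L + 1) * (1 - w)⁻¹‖ ≤ r ^ (L + 1) / (1 - r) := by
      rw [norm_mul, norm_pow, hwn, norm_inv, div_eq_mul_inv]
      gcongr
    linarith [neg_abs_le (w ^ (L + 1) * (1 - w)⁻¹).re]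
  have g5 : ((1 - w)⁻¹).re = (1 - r * Real.cos θ) / ((1 - r) ^ 2 + r * u) := by
    rw [Complex.inv_re, hsq]; simp [hwre]
  have hcos : Real.cos θ = 1 - u / 2 := by linarith
  have g6 : 1 / (2 * (1 - r)) * (r * u / ((1 - r) ^ 2 + r * u)) ≤ 1 / (1 - r) - ((1 - w)⁻¹).re := by
    rw [g5, hcos]
    have : 1 / (1 - r) - (1 - r * (1 - u / 2)) / ((1 - r) ^ 2 + r * u) -
      1 / (2 * (1 - r)) * (r * u / ((1 - r) ^ 2 + r * u)) =
      (r * u * r) / (2 * (1 - r) * ((1 - r) ^ 2 + r * u)) := by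
      field_simp
      ring
    have h3 : 0 ≤ (r * u * r) / (2 * (1 - r) * ((1 - r) ^ 2 + r * u)) := by positivity
    linarith
  have g7 : (1 - r ^ (L + 1)) / (1 - r) = 1 / (1 - r) - r ^ (L + 1) / (1 - r) := by ring
  have g8 : 2 * r ^ (L + 1) / (1 - r) = 2 * (r ^ (L + 1) / (1 - r)) := by ring
  rw [g7, g8]
  linarith

lemma sum_lower2 (β θ y r u : ℝ) (hβ : 0 < β) (hβ2 : β ≤ 1 / 2) (hθ : |θ| ≤ Real.pi)
    (hy : θ ^ 2 = β ^ 3 * y ^ 2) (hr : r = Real.exp (-β)) (hu : u = 2 * (1 - Real.cos θ)) :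
    Real.exp (-(1 / (2 * (1 - r)) * (r * u / ((1 - r) ^ 2 + r * u))) / 4) ≤
      7299072 / (1 + y ^ 2) := by
  have hδ : 1 - r ≤ β := by rw [hr]; linarith [Real.add_one_le_exp (-β)]
  have hr2 : 1 / 2 ≤ r := by linarith
  have hδ0 : 0 < 1 - r := by
    rw [hr]; have : Real.exp (-β) < 1 := Real.exp_lt_one_iff.mpr (by linarith)
    linarith
  have hu2 : 2 / 5 * θ ^ 2 ≤ u := by
    have h1 := Real.cos_le_one_sub_mul_cos_sq hθ
    have h2 : (1 : ℝ) / 5 ≤ 2 / Real.pi ^ 2 := by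
      rw [div_le_div_iff₀ (by norm_num) (by positivity)]
      have h3 := Real.pi_lt_d2
      have h4 := Real.pi_pos
      nlinarith
    have h5 := mul_le_mul_of_nonneg_right h2 (sq_nonneg θ)
    linarith
  have ht : θ ^ 2 / 5 ≤ r * u := by nlinarith [sq_nonneg θ]
  have hfrac : (θ ^ 2 / 5) / (β ^ 2 + θ ^ 2 / 5) ≤ r * u / ((1 - r) ^ 2 + r * u) := by
    have : 0 ≤ θ ^ 2 / 5 := by positivity
    have h1 : (1 - r) ^ 2 ≤ β ^ 2 := by gcongr
    have h2 : 0 < (1 - r) ^ 2 := by positivity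
    rw [div_le_div_iff₀ (by positivity) (by linarith)]
    nlinarith
  have hD : 1 / (2 * β) * ((θ ^ 2 / 5) / (β ^ 2 + θ ^ 2 / 5)) ≤
      1 / (2 * (1 - r)) * (r * u / ((1 - r) ^ 2 + r * u)) := by
    gcongr
  refine (Real.exp_le_exp.mpr (by linarith : _ ≤
    -(1 / (2 * β) * ((θ ^ 2 / 5) / (β ^ 2 + θ ^ 2 / 5))) / 4)).trans ?_
  by_cases hc : θ ^ 2 ≤ β ^ 2
  · have h1 : y ^ 2 / 12 ≤ 1 / (2 * β) * ((θ ^ 2 / 5) / (β ^ 2 + θ ^ 2 / 5)) := by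
      calc y ^ 2 / 12 = 1 / (2 * β) * ((θ ^ 2 / 5) / (β ^ 2 + β ^ 2 / 5)) := by
            rw [hy]; field_simp; ring
        _ ≤ _ := by gcongr
    calc _ ≤ Real.exp (-(y ^ 2 / 48)) := Real.exp_le_exp.mpr (by linarith)
      _ ≤ 1 / (1 + y ^ 2 / 48) := by
          rw [Real.exp_neg, ← one_div]
          exact one_div_le_one_div_of_le (by positivity) (by linarith [Real.add_one_le_exp (y ^ 2 / 48)])
      _ ≤ _ := by
          rw [div_le_div_iff₀ (by positivity) (by positivity)]
          nlinarith [sq_nonneg y]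
  · push Not at hc
    have h1 : 1 / (12 * β) ≤ 1 / (2 * β) * ((θ ^ 2 / 5) / (β ^ 2 + θ ^ 2 / 5)) := by
      have : (1 : ℝ) / 6 ≤ (θ ^ 2 / 5) / (β ^ 2 + θ ^ 2 / 5) := by
        rw [div_le_div_iff₀ (by norm_num) (by positivity)]
        linarith
      calc 1 / (12 * β) = 1 / (2 * β) * (1 / 6) := by field_simp; norm_num
        _ ≤ _ := by gcongr
    have h2 : Real.exp (-(1 / (48 * β))) ≤ 6 * (48 * β) ^ 3 := by
      have h3 := Real.pow_div_factorial_le_exp (1 / (48 * β)) (by positivity) 3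
      rw [Real.exp_neg, inv_le_comm₀ (Real.exp_pos _) (by positivity)]
      refine le_trans (le_of_eq ?_) h3
      simp [Nat.factorial]
      field_simp
    have h4 : 1 + y ^ 2 ≤ 11 / β ^ 3 := by
      have h5 : θ ^ 2 ≤ 10 := by
        have := Real.pi_lt_d2
        rw [← sq_abs]
        have h6 := abs_nonneg θ
        nlinarith
      rw [le_div_iff₀ (by positivity)]
      have : β ^ 3 ≤ 1 := pow_le_one₀ hβ.le (by linarith)
      nlinarith
    calc _ ≤ Real.exp (-(1 / (48 * β))) := by
          apply Real.exp_le_exp.mpr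
          have : 1 / (48 * β) = 1 / (12 * β) / 4 := by field_simp; norm_num
          linarith
      _ ≤ 6 * (48 * β) ^ 3 := h2
      _ ≤ _ := by
          rw [le_div_iff₀ (by positivity)]
          calc 6 * (48 * β) ^ 3 * (1 + y ^ 2) ≤ 6 * (48 * β) ^ 3 * (11 / β ^ 3) := by gcongr
            _ = _ := by field_simp; norm_num

lemma gen_bound (L : ℕ) (β θ y : ℝ) (hβ : 0 < β) (hβ2 : β ≤ 1 / 2) (hθ : |θ| ≤ Real.pi)
    (hy : θ ^ 2 = β ^ 3 * y ^ 2) (hL : Real.exp (-L * β) ≤ β ^ 2) :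
    ‖gen L (β + θ * Complex.I)‖ ≤ ‖gen L β‖ * (3 * 7299072 / (1 + y ^ 2)) := by
  refine (gen_bound0 L β θ hβ.le).trans ?_
  refine mul_le_mul_of_nonneg_left ?_ (norm_nonneg _)
  set r := Real.exp (-β) with hr
  have hδ : 1 - r ≤ β := by rw [hr]; linarith [Real.add_one_le_exp (-β)]
  have hr2 : 1 / 2 ≤ r := by linarith
  have hδ0 : β / 2 ≤ 1 - r := by
    have h2 : Real.exp (-β) ≤ 1 / (1 + β) := by
      rw [Real.exp_neg, ← one_div]
      apply one_div_le_one_div_of_le (by linarith)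
      linarith [Real.add_one_le_exp β]
    have h3 : 1 / (1 + β) ≤ 1 - β / 2 := by
      rw [div_le_iff₀ (by linarith)]
      nlinarith
    linarith
  have h1 := sum_lower L r θ _ hr2 (by linarith) rfl
  have h2 := sum_lower2 β θ y r _ hβ hβ2 hθ hy hr rfl
  have h3 : 2 * r ^ (L + 1) / (1 - r) ≤ 4 := by
    rw [div_le_iff₀ (by linarith)]
    have h4 : r ^ (L + 1) ≤ β ^ 2 := by
      rw [pow_succ]
      have : r ^ L = Real.exp (-L * β) := by rw [hr, ← Real.exp_nat_mul]; ring_nf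
      rw [this]
      have := Real.exp_pos (-L * β)
      nlinarith
    nlinarith
  set D := 1 / (2 * (1 - r)) * (r * (2 * (1 - Real.cos θ)) / ((1 - r) ^ 2 + r * (2 * (1 - Real.cos θ))))
  calc _ ≤ Real.exp (1 + -D / 4) := Real.exp_le_exp.mpr (by linarith)
    _ = Real.exp 1 * Real.exp (-D / 4) := Real.exp_add _ _
    _ ≤ 3 * (7299072 / (1 + y ^ 2)) := by
        gcongr
        linarith [Real.exp_one_lt_d9]
    _ = _ := by ring
end MedianQMC

namespace MedianQMC
open Filter Topology

noncomputable def bet (s m : ℕ) : ℝ := s * Real.pi ^ 2 / (6 * Real.log 2) / m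
noncomputable def xx (s m : ℕ) : ℝ := lam * m ^ 2 / s
noncomputable def NN (s m : ℕ) : ℕ := ⌊xx s m⌋₊
noncomputable def bb (s m : ℕ) : ℝ := Real.sqrt (bet s m)

noncomputable def Phi (s m : ℕ) (θ : ℝ) : ℂ :=
  (∑ j ∈ Finset.range (NN s m + 1), Complex.exp ((j : ℂ) * (bet s m + θ * Complex.I))) *
        gen (m ^ 2) (bet s m + θ * Complex.I) ^ s

noncomputable def GG (s m : ℕ) (y : ℝ) : ℂ :=
  (Set.Ioc (-(Real.pi / (bet s m * bb s m))) (Real.pi / (bet s m * bb s m))).indicator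
    (fun y => ((2 : ℂ) ^ m)⁻¹ * bet s m * Phi s m (bet s m * bb s m * y)) y

/-- good index -/
def Good (s m : ℕ) : Prop :=
  1 ≤ m ∧ bet s m ≤ 1 / 2 ∧ Real.exp (-((m ^ 2 : ℕ) : ℝ) * bet s m) ≤ bet s m ^ 2

lemma lam_pos : 0 < lam := by
  unfold lam
  have := Real.log_pos one_lt_two
  positivity

lemma lam_le : lam ≤ 1 := by
  unfold lam
  have h := Real.log_two_lt_d9
  have h0 := Real.log_pos one_lt_two
  have h1 := Real.pi_gt_three
  rw [div_le_one (by positivity)]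
  nlinarith

lemma xx_nonneg (s m : ℕ) : 0 ≤ xx s m := by
  unfold xx
  have := lam_pos
  positivity

lemma NN_le (s m : ℕ) (hs : 1 ≤ s) : NN s m ≤ m ^ 2 := by
  unfold NN
  apply Nat.floor_le_of_le
  unfold xx
  have hs' : (1 : ℝ) ≤ s := by exact_mod_cast hs
  rw [div_le_iff₀ (by positivity)]
  push_cast
  have := lam_le
  have h2 : (0 : ℝ) ≤ m ^ 2 := by positivity
  nlinarith

lemma bet_pos (s m : ℕ) (hs : 1 ≤ s) (hm : 1 ≤ m) : 0 < bet s m := by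
  unfold bet
  have := Real.log_pos one_lt_two
  have hs' : (0 : ℝ) < s := by exact_mod_cast hs
  have hm' : (0 : ℝ) < m := by exact_mod_cast hm
  positivity

lemma tendsto_bet (s : ℕ) : Tendsto (bet s) atTop (𝓝 0) :=
  tendsto_const_div_atTop_nhds_zero_nat _

lemma tendsto_bb (s : ℕ) : Tendsto (bb s) atTop (𝓝 0) := by
  have := (Real.continuous_sqrt.tendsto 0).comp (tendsto_bet s)
  rw [Real.sqrt_zero] at this
  exact this

lemma good_eventually (s : ℕ) (hs : 1 ≤ s) : ∀ᶠ m in atTop, Good s m := by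
  have h1 : ∀ᶠ m in atTop, bet s m ≤ 1 / 2 :=
    (tendsto_bet s).eventually (Iic_mem_nhds (by norm_num))
  set c : ℝ := s * Real.pi ^ 2 / (6 * Real.log 2) with hc
  have hc0 : 0 < c := by
    have := bet_pos s 1 hs le_rfl
    simpa [bet] using this
  have h2 : Tendsto (fun m : ℕ => (m : ℝ) ^ (2 : ℝ) * Real.exp (-c * m)) atTop (𝓝 0) :=
    (tendsto_rpow_mul_exp_neg_mul_atTop_nhds_zero 2 c hc0).comp tendsto_natCast_atTop_atTop
  have h3 : ∀ᶠ m : ℕ in atTop, (m : ℝ) ^ (2 : ℝ) * Real.exp (-c * m) ≤ c ^ 2 :=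
    h2.eventually (Iic_mem_nhds (by positivity))
  filter_upwards [h1, h3, eventually_ge_atTop 1] with m h1 h3 hm
  refine ⟨hm, h1, ?_⟩
  have hm' : (0 : ℝ) < m := by exact_mod_cast hm
  have e : -((m ^ 2 : ℕ) : ℝ) * bet s m = -c * m := by
    unfold bet; rw [← hc]; push_cast; field_simp
  rw [e]
  unfold bet; rw [← hc, div_pow, le_div_iff₀ (by positivity), mul_comm]
  simpa using h3

lemma two_pi_count (s m : ℕ) (hs : 1 ≤ s) (hm : 1 ≤ m) :
    ((2 * Real.pi * ({k : Fin s → ℕ | norm1Vec k ≤ NN s m}.ncard : ℝ) / 2 ^ m : ℝ) : ℂ) =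
      bb s m * ∫ y, GG s m y := by
  have hβ := bet_pos s m hs hm
  have hb : 0 < bb s m := Real.sqrt_pos.mpr hβ
  have h := count_integral s (NN s m) (m ^ 2) (NN_le s m hs) (bet s m)
  change ∫ θ in (-Real.pi)..Real.pi, Phi s m θ = _ at h
  set R := Real.pi / (bet s m * bb s m) with hR
  have hR0 : 0 < R := by positivity
  have h1 : ∫ y, GG s m y = ∫ y in (-R)..R, ((2 : ℂ) ^ m)⁻¹ * bet s m *
      Phi s m (bet s m * bb s m * y) := by
    rw [intervalIntegral.integral_of_le (by linarith)]
    exact MeasureTheory.integral_indicator measurableSet_Ioc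
  rw [h1, intervalIntegral.integral_const_mul]
  have h2 := intervalIntegral.smul_integral_comp_mul_left (a := -R) (b := R) (Phi s m)
    (bet s m * bb s m)
  have e1 : bet s m * bb s m * R = Real.pi := by rw [hR]; field_simp
  have e2 : bet s m * bb s m * (-R) = -Real.pi := by rw [mul_neg, e1]
  rw [e1, e2, h, Complex.real_smul] at h2
  push_cast at h2 ⊢
  rw [← h2]
  ring

lemma key_exponent (s m : ℕ) (hs : 1 ≤ s) (hm : 1 ≤ m) (w : ℂ) (hw : w ≠ 0) :
    (s : ℂ) * ((Real.pi : ℂ) ^ 2 / (12 * (bet s m * w))) + xx s m * (bet s m * w) - m * Real.log 2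
     = ((m * Real.log 2 / 2 : ℝ) : ℂ) * ((w - 1) ^ 2 / w) := by
  have hs' : (s : ℂ) ≠ 0 := by exact_mod_cast (by omega : s ≠ 0)
  have hm' : (m : ℂ) ≠ 0 := by exact_mod_cast (by omega : m ≠ 0)
  have hl : (Real.log 2 : ℂ) ≠ 0 := by exact_mod_cast (Real.log_pos one_lt_two).ne'
  have hp : (Real.pi : ℂ) ≠ 0 := by exact_mod_cast Real.pi_ne_zero
  unfold bet xx lam
  push_cast
  field_simp
  ring

lemma gen_main (s m : ℕ) (hs : 1 ≤ s) (hg : Good s m) (w : ℂ) (hre : w.re = 1)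
    (him : |w.im| ≤ 1) :
    ∃ E : ℂ, ‖E‖ ≤ 20 * bet s m ∧
    ((2 : ℂ) ^ m)⁻¹ * (Complex.exp (NN s m * (bet s m * w)) * gen (m ^ 2) (bet s m * w) ^ s) =
      Complex.exp (((m * Real.log 2 / 2 : ℝ) : ℂ) * ((w - 1) ^ 2 / w) - s * Real.log 2 / 2
        + s * E - (xx s m - NN s m : ℝ) * (bet s m * w)) := by
  obtain ⟨hm, hβ2, hL⟩ := hg
  have hβ := bet_pos s m hs hm
  have hzr : ((bet s m : ℂ) * w).re = bet s m := by simp [hre]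
  have hzi : ((bet s m : ℂ) * w).im = bet s m * w.im := by simp
  obtain ⟨E, hE, hgen⟩ := gen_asymp (bet s m * w) (m ^ 2) (by rw [hzr]; exact hβ)
    (by rw [hzr]; exact hβ2) (by
      rw [hzr, hzi, abs_mul, abs_of_pos hβ]; nlinarith) (by rw [hzr]; exact hL)
  rw [hzr] at hE
  refine ⟨E, hE, ?_⟩
  have hw : w ≠ 0 := by rintro rfl; simp at hre
  have hk := key_exponent s m hs hm w hw
  have h2 : ((2 : ℂ) ^ m)⁻¹ = Complex.exp (-(m * Real.log 2)) := by
    rw [Complex.exp_neg, Complex.exp_nat_mul, ← Complex.ofReal_exp, Real.exp_log (by norm_num)]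
    norm_num
  have hlog : Complex.log 2 = (Real.log 2 : ℝ) := by
    rw [Complex.ofReal_log (by norm_num)]; norm_num
  rw [hgen, ← Complex.exp_nat_mul, h2, ← Complex.exp_add, ← Complex.exp_add, ← hk, hlog]
  congr 1
  push_cast
  ring

lemma frac_bound (s m : ℕ) : 0 ≤ xx s m - NN s m ∧ xx s m - NN s m ≤ 1 := by
  have h1 := Nat.floor_le (xx_nonneg s m)
  have h2 := Nat.lt_floor_add_one (xx s m)
  unfold NN
  constructor <;> linarith

lemma sumexp_bound (β : ℝ) (N : ℕ) (z : ℂ) (hz : z.re = β) (hβ : 0 < β) (hβ2 : β ≤ 1 / 2) :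
    β * ‖∑ j ∈ Finset.range (N + 1), Complex.exp ((j : ℂ) * z)‖ ≤ 2 * Real.exp (N * β) := by
  have h1 : ‖∑ j ∈ Finset.range (N + 1), Complex.exp ((j : ℂ) * z)‖ ≤
      ∑ j ∈ Finset.range (N + 1), Real.exp β ^ j := by
    refine (norm_sum_le _ _).trans (le_of_eq (Finset.sum_congr rfl fun j _ => ?_))
    rw [Complex.norm_exp, ← Real.exp_nat_mul]
    simp [hz]
  have h2 := geom_sum_mul (Real.exp β) (N + 1)
  have h3 : Real.exp β ^ (N + 1) = Real.exp (N * β) * Real.exp β := by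
    rw [pow_succ, ← Real.exp_nat_mul]
  have h4 := Real.add_one_le_exp β
  have h5 : Real.exp β ≤ 2 := by
    calc Real.exp β ≤ Real.exp (1 / 2) := Real.exp_le_exp.mpr hβ2
      _ ≤ 2 := by
        have h6 : Real.exp (1 / 2) * Real.exp (1 / 2) = Real.exp 1 := by
          rw [← Real.exp_add]; norm_num
        have := Real.exp_one_lt_d9
        nlinarith [Real.exp_pos (1 / 2)]
  have h7 : 0 ≤ ∑ j ∈ Finset.range (N + 1), Real.exp β ^ j :=
    Finset.sum_nonneg fun _ _ => by positivity
  have h8 := Real.exp_pos (N * β)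
  calc _ ≤ β * ∑ j ∈ Finset.range (N + 1), Real.exp β ^ j := by gcongr
    _ ≤ (∑ j ∈ Finset.range (N + 1), Real.exp β ^ j) * (Real.exp β - 1) := by nlinarith
    _ = Real.exp (N * β) * Real.exp β - 1 := by rw [h2, h3]
    _ ≤ _ := by nlinarith

lemma genreal_bound (s m : ℕ) (hs : 1 ≤ s) (hg : Good s m) :
    ((2 : ℝ) ^ m)⁻¹ * (Real.exp (NN s m * bet s m) * ‖gen (m ^ 2) (bet s m)‖ ^ s) ≤
      Real.exp (10 * s) := by
  obtain ⟨E, hE, h⟩ := gen_main s m hs hg 1 (by simp) (by simp)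
  have hβ := bet_pos s m hs hg.1
  have h1 := congrArg norm h
  rw [norm_mul, norm_mul, norm_inv, norm_pow, norm_pow, Complex.norm_exp, Complex.norm_exp] at h1
  simp only [mul_one] at h1
  have e1 : ((NN s m : ℂ) * bet s m).re = NN s m * bet s m := by simp
  rw [e1] at h1
  have e2 : ‖(2 : ℂ)‖ = 2 := by simp
  rw [e2] at h1
  rw [h1]
  apply Real.exp_le_exp.mpr
  have e3 : (((m * Real.log 2 / 2 : ℝ) : ℂ) * (((1 : ℂ) - 1) ^ 2 / 1) - s * Real.log 2 / 2
        + s * E - (xx s m - NN s m : ℝ) * (bet s m)).re =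
        - (s * Real.log 2 / 2) + s * E.re - (xx s m - NN s m) * bet s m := by
    have : (((m * Real.log 2 / 2 : ℝ) : ℂ) * (((1 : ℂ) - 1) ^ 2 / 1) - s * Real.log 2 / 2
        + s * E - (xx s m - NN s m : ℝ) * (bet s m)) = 
        ((- (s * Real.log 2 / 2) - (xx s m - NN s m) * bet s m : ℝ) : ℂ) + (s : ℝ) * E := by
      push_cast; ring
    rw [this, Complex.add_re, Complex.ofReal_re, Complex.re_ofReal_mul]
    ring
  rw [e3]
  have hl := Real.log_pos one_lt_two
  have hE' : E.re ≤ 10 := by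
    have := Complex.re_le_norm E
    linarith [hg.2.1]
  have h2 := (frac_bound s m).1
  have hs0 : (0 : ℝ) ≤ s := Nat.cast_nonneg s
  have h3 : 0 ≤ (xx s m - NN s m) * bet s m := by positivity
  have h4 : 0 ≤ s * Real.log 2 / 2 := by positivity
  nlinarith

lemma GG_bound (s m : ℕ) (hs : 1 ≤ s) (hg : Good s m) (y : ℝ) :
    ‖GG s m y‖ ≤ (2 * Real.exp (10 * s) * (3 * 7299072)) * (1 + y ^ 2)⁻¹ := by
  unfold GG
  by_cases hy : y ∈ Set.Ioc (-(Real.pi / (bet s m * bb s m))) (Real.pi / (bet s m * bb s m))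
  swap
  · rw [Set.indicator_of_notMem hy, norm_zero]; positivity
  rw [Set.indicator_of_mem hy]
  have hβ := bet_pos s m hs hg.1
  have hb : 0 < bb s m := Real.sqrt_pos.mpr hβ
  have hbb : bb s m ^ 2 = bet s m := Real.sq_sqrt hβ.le
  set θ := bet s m * bb s m * y with hθ
  have hθ1 : |θ| ≤ Real.pi := by
    have h1 : |y| ≤ Real.pi / (bet s m * bb s m) := abs_le.mpr ⟨hy.1.le, hy.2⟩
    rw [hθ, abs_mul, abs_of_pos (by positivity : 0 < bet s m * bb s m)]
    rwa [le_div_iff₀ (by positivity), mul_comm] at h1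
  have hθ2 : θ ^ 2 = bet s m ^ 3 * y ^ 2 := by
    rw [hθ, mul_pow, mul_pow, hbb]; ring
  have h1 := gen_bound (m ^ 2) (bet s m) θ y hβ hg.2.1 hθ1 hθ2 hg.2.2
  have h0 : ‖gen (m ^ 2) (bet s m + θ * Complex.I)‖ ≤ ‖gen (m ^ 2) (bet s m)‖ := by
    refine (gen_bound0 (m ^ 2) (bet s m) θ hβ.le).trans ?_
    refine mul_le_of_le_one_right (norm_nonneg _) ?_
    rw [Real.exp_le_one_iff]
    have : 0 ≤ ∑ ℓ ∈ Finset.range (m ^ 2 + 1),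
      Real.exp (-(bet s m)) ^ ℓ * (1 - Real.cos (ℓ * θ)) :=
      Finset.sum_nonneg fun ℓ _ => mul_nonneg (by positivity) (by linarith [Real.cos_le_one (ℓ * θ)])
    linarith
  have h2 : ‖gen (m ^ 2) (bet s m + θ * Complex.I)‖ ^ s ≤
      ‖gen (m ^ 2) (bet s m)‖ ^ s * (3 * 7299072 / (1 + y ^ 2)) := by
    obtain ⟨t, rfl⟩ : ∃ t, s = t + 1 := ⟨s - 1, by omega⟩
    rw [pow_succ _ t, pow_succ _ t, mul_assoc]
    gcongr
  have h3 := sumexp_bound (bet s m) (NN s m) (bet s m + θ * Complex.I) (by simp) hβ hg.2.1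
  have h4 := genreal_bound s m hs hg
  unfold Phi
  rw [norm_mul, norm_mul, norm_mul, norm_inv, norm_pow, norm_pow, Complex.norm_real,
    Real.norm_of_nonneg hβ.le]
  have e2 : ‖(2 : ℂ)‖ = 2 := by simp
  rw [e2]
  set S := ‖∑ j ∈ Finset.range (NN s m + 1), Complex.exp ((j : ℂ) * (bet s m + θ * Complex.I))‖
  calc ((2 : ℝ) ^ m)⁻¹ * bet s m * (S * ‖gen (m ^ 2) (bet s m + θ * Complex.I)‖ ^ s)
      = ((2 : ℝ) ^ m)⁻¹ * ((bet s m * S) * ‖gen (m ^ 2) (bet s m + θ * Complex.I)‖ ^ s) := by ring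
    _ ≤ ((2 : ℝ) ^ m)⁻¹ * ((2 * Real.exp (NN s m * bet s m)) *
        (‖gen (m ^ 2) (bet s m)‖ ^ s * (3 * 7299072 / (1 + y ^ 2)))) := by gcongr
    _ = 2 * (((2 : ℝ) ^ m)⁻¹ * (Real.exp (NN s m * bet s m) * ‖gen (m ^ 2) (bet s m)‖ ^ s)) *
        (3 * 7299072) * (1 + y ^ 2)⁻¹ := by ring
    _ ≤ _ := by gcongr

end MedianQMC

namespace MedianQMC
open Filter Topology

noncomputable def ww (s m : ℕ) (y : ℝ) : ℂ := 1 + (bb s m * y : ℝ) * Complex.I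

noncomputable def KK (s : ℕ) : ℝ := s * Real.pi ^ 2 / 12

lemma ww_re (s m : ℕ) (y : ℝ) : (ww s m y).re = 1 := by simp [ww]
lemma ww_im (s m : ℕ) (y : ℝ) : (ww s m y).im = bb s m * y := by simp [ww]
lemma ww_ne (s m : ℕ) (y : ℝ) : ww s m y ≠ 0 := by
  intro h; have := ww_re s m y; rw [h] at this; simp at this

lemma tendsto_by (s : ℕ) (y : ℝ) : Tendsto (fun m => bb s m * y) atTop (𝓝 0) := by
  simpa using (tendsto_bb s).mul_const y

lemma tendsto_ww (s : ℕ) (y : ℝ) : Tendsto (fun m => ww s m y) atTop (𝓝 1) := by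
  have h1 : Tendsto (fun m => ((bb s m * y : ℝ) : ℂ)) atTop (𝓝 ((0 : ℝ) : ℂ)) :=
    (Complex.continuous_ofReal.tendsto 0).comp (tendsto_by s y)
  have h2 := (h1.mul_const Complex.I).const_add 1
  simpa [ww] using h2

lemma tendsto_betC (s : ℕ) : Tendsto (fun m => (bet s m : ℂ)) atTop (𝓝 0) := by
  have h1 : Tendsto (fun m => (bet s m : ℂ)) atTop (𝓝 ((0 : ℝ) : ℂ)) :=
    (Complex.continuous_ofReal.tendsto 0).comp (tendsto_bet s)
  simpa using h1

lemma tendsto_z (s : ℕ) (y : ℝ) : Tendsto (fun m => (bet s m : ℂ) * ww s m y) atTop (𝓝 0) := by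
  simpa using (tendsto_betC s).mul (tendsto_ww s y)

lemma lim_A1 (s : ℕ) (hs : 1 ≤ s) (y : ℝ) :
    Tendsto (fun m => (bet s m : ℂ) / (1 - Complex.exp (-((bet s m : ℂ) * ww s m y)))) atTop
      (𝓝 1) := by
  have hd : HasDerivAt (fun z : ℂ => 1 - Complex.exp (-z)) 1 0 := by
    have := ((hasDerivAt_neg (0 : ℂ)).cexp).const_sub 1
    simpa using this
  have h1 := hasDerivAt_iff_tendsto_slope_zero.mp hd
  have h2 : Tendsto (fun m => (bet s m : ℂ) * ww s m y) atTop (𝓝[≠] 0) := by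
    refine tendsto_nhdsWithin_iff.mpr ⟨tendsto_z s y, ?_⟩
    filter_upwards [eventually_ge_atTop 1] with m hm
    exact mul_ne_zero (by exact_mod_cast (bet_pos s m hs hm).ne') (ww_ne s m y)
  have h3 := ((h1.comp h2).inv₀ one_ne_zero).mul ((tendsto_ww s y).inv₀ one_ne_zero)
  rw [inv_one, one_mul] at h3
  refine h3.congr fun m => ?_
  have := ww_ne s m y
  simp only [Function.comp_apply, zero_add, neg_zero, Complex.exp_zero, sub_self, sub_zero,
    smul_eq_mul]
  rw [mul_inv, inv_inv, div_eq_mul_inv]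
  field_simp

lemma xx_bet (s m : ℕ) (hs : 1 ≤ s) (hm : 1 ≤ m) : xx s m * bet s m = m * (Real.log 2 / 2) := by
  unfold xx bet lam
  have hs' : (0 : ℝ) < s := by exact_mod_cast hs
  have hm' : (0 : ℝ) < m := by exact_mod_cast hm
  have := Real.log_pos one_lt_two
  field_simp
  ring

lemma lim_A2 (s : ℕ) (hs : 1 ≤ s) (y : ℝ) :
    Tendsto (fun m => Complex.exp (-(((NN s m + 1 : ℕ) : ℂ) * ((bet s m : ℂ) * ww s m y)))) atTop
      (𝓝 0) := by
  rw [tendsto_zero_iff_norm_tendsto_zero]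
  have h1 : Tendsto (fun m : ℕ => Real.exp (-((m : ℝ) * (Real.log 2 / 2)))) atTop (𝓝 0) := by
    refine Real.tendsto_exp_atBot.comp (tendsto_neg_atTop_atBot.comp ?_)
    exact tendsto_natCast_atTop_atTop.atTop_mul_const (by linarith [Real.log_pos one_lt_two])
  refine squeeze_zero' (Eventually.of_forall fun m => norm_nonneg _) ?_ h1
  filter_upwards [eventually_ge_atTop 1] with m hm
  rw [Complex.norm_exp]
  apply Real.exp_le_exp.mpr
  have e : (-(((NN s m + 1 : ℕ) : ℂ) * ((bet s m : ℂ) * ww s m y))).re =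
      -((NN s m + 1) * bet s m) := by
    have : ((NN s m + 1 : ℕ) : ℂ) = ((NN s m + 1 : ℝ) : ℂ) := by push_cast; rfl
    rw [this, Complex.neg_re, Complex.re_ofReal_mul, Complex.re_ofReal_mul, ww_re, mul_one]
  rw [e, ← xx_bet s m hs hm]
  have := (frac_bound s m).2
  have hβ := bet_pos s m hs hm
  nlinarith

lemma exponent_sq (s m : ℕ) (hs : 1 ≤ s) (hm : 1 ≤ m) (y : ℝ) :
    ((m * Real.log 2 / 2 : ℝ) : ℂ) * ((ww s m y - 1) ^ 2 / ww s m y) =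
      -((KK s * y ^ 2 : ℝ) : ℂ) / ww s m y := by
  have h1 : (ww s m y - 1) ^ 2 = -((bet s m * y ^ 2 : ℝ) : ℂ) := by
    have hb : bb s m ^ 2 = bet s m := Real.sq_sqrt (bet_pos s m hs hm).le
    rw [← hb]
    unfold ww
    push_cast
    ring_nf
    rw [Complex.I_sq]; ring
  have h2 : m * Real.log 2 / 2 * bet s m = KK s := by
    unfold bet KK
    have hm' : (0 : ℝ) < m := by exact_mod_cast hm
    have := Real.log_pos one_lt_two
    field_simp
    ring
  rw [h1, ← h2]
  push_cast
  ring

lemma lim_A3 (s : ℕ) (hs : 1 ≤ s) (y : ℝ) :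
    Tendsto (fun m => ((2 : ℂ) ^ m)⁻¹ * (Complex.exp (NN s m * (bet s m * ww s m y)) *
      gen (m ^ 2) (bet s m * ww s m y) ^ s)) atTop
      (𝓝 (Complex.exp (-((KK s * y ^ 2 : ℝ) : ℂ) - s * Real.log 2 / 2))) := by
  have hex : ∀ m, ∃ E : ℂ, (Good s m ∧ |bb s m * y| ≤ 1) → (‖E‖ ≤ 20 * bet s m ∧
    ((2 : ℂ) ^ m)⁻¹ * (Complex.exp (NN s m * (bet s m * ww s m y)) *
      gen (m ^ 2) (bet s m * ww s m y) ^ s) =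
      Complex.exp (((m * Real.log 2 / 2 : ℝ) : ℂ) * ((ww s m y - 1) ^ 2 / ww s m y)
        - s * Real.log 2 / 2 + s * E - (xx s m - NN s m : ℝ) * (bet s m * ww s m y))) := by
    intro m
    by_cases h : Good s m ∧ |bb s m * y| ≤ 1
    · obtain ⟨E, hE⟩ := gen_main s m hs h.1 (ww s m y) (ww_re s m y) (by rw [ww_im]; exact h.2)
      exact ⟨E, fun _ => hE⟩
    · exact ⟨0, fun h' => absurd h' h⟩
  choose E hE using hex
  have hev : ∀ᶠ m in atTop, Good s m ∧ |bb s m * y| ≤ 1 := by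
    refine (good_eventually s hs).and ?_
    have := (tendsto_by s y).abs
    rw [abs_zero] at this
    exact this.eventually (Iic_mem_nhds one_pos)
  have hE0 : Tendsto E atTop (𝓝 0) := by
    rw [tendsto_zero_iff_norm_tendsto_zero]
    have h20 := (tendsto_bet s).const_mul 20
    rw [mul_zero] at h20
    refine squeeze_zero' (Eventually.of_forall fun m => norm_nonneg _) ?_ h20
    filter_upwards [hev] with m hm
    exact (hE m hm).1
  have hfr : Tendsto (fun m => ((xx s m - NN s m : ℝ) : ℂ) * (bet s m * ww s m y)) atTop (𝓝 0) := by
    rw [tendsto_zero_iff_norm_tendsto_zero]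
    refine squeeze_zero (fun m => norm_nonneg _) (fun m => ?_)
      (tendsto_zero_iff_norm_tendsto_zero.mp (tendsto_z s y))
    rw [norm_mul, Complex.norm_real, Real.norm_of_nonneg (frac_bound s m).1]
    exact mul_le_of_le_one_left (norm_nonneg _) (frac_bound s m).2
  have hmain : Tendsto (fun m => -((KK s * y ^ 2 : ℝ) : ℂ) / ww s m y - s * Real.log 2 / 2
      + s * E m - ((xx s m - NN s m : ℝ) : ℂ) * (bet s m * ww s m y)) atTop
      (𝓝 (-((KK s * y ^ 2 : ℝ) : ℂ) / 1 - s * Real.log 2 / 2 + s * 0 - 0)) :=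
    (((tendsto_const_nhds.div (tendsto_ww s y) one_ne_zero).sub_const _).add
      (hE0.const_mul _)).sub hfr
  rw [div_one, mul_zero, add_zero, sub_zero] at hmain
  have := (Complex.continuous_exp.tendsto _).comp hmain
  refine this.congr' ?_
  filter_upwards [hev, eventually_ge_atTop 1] with m hm hm1
  rw [(hE m hm).2, exponent_sq s m hs hm1]
  rfl

lemma lim_GG (s : ℕ) (hs : 1 ≤ s) (y : ℝ) :
    Tendsto (fun m => GG s m y) atTop
      (𝓝 (Complex.exp (-((KK s * y ^ 2 : ℝ) : ℂ) - s * Real.log 2 / 2))) := by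
  have h := ((lim_A1 s hs y).mul ((lim_A2 s hs y).const_sub 1)).mul (lim_A3 s hs y)
  rw [sub_zero, mul_one, one_mul] at h
  refine h.congr' ?_
  have hin : ∀ᶠ m in atTop, |bet s m * bb s m * y| < Real.pi := by
    have h1 := ((tendsto_bet s).mul (tendsto_by s y)).abs
    rw [mul_zero, abs_zero] at h1
    filter_upwards [h1.eventually (Iio_mem_nhds Real.pi_pos)] with m hm
    rw [mul_assoc]; exact hm
  filter_upwards [hin, eventually_ge_atTop 1] with m hm hm1
  have hβ := bet_pos s m hs hm1
  have hb : 0 < bb s m := Real.sqrt_pos.mpr hβ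
  have hmem : y ∈ Set.Ioc (-(Real.pi / (bet s m * bb s m))) (Real.pi / (bet s m * bb s m)) := by
    rw [abs_mul, abs_of_pos (by positivity : 0 < bet s m * bb s m), mul_comm,
      ← lt_div_iff₀ (by positivity), abs_lt] at hm
    exact ⟨hm.1, hm.2.le⟩
  unfold GG
  rw [Set.indicator_of_mem hmem]
  unfold Phi
  have hz : (bet s m : ℂ) + ((bet s m * bb s m * y : ℝ) : ℂ) * Complex.I = bet s m * ww s m y := by
    unfold ww; push_cast; ring
  rw [hz]
  set z : ℂ := bet s m * ww s m y with hzdef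
  have hzre : z.re = bet s m := by rw [hzdef, Complex.re_ofReal_mul, ww_re, mul_one]
  have hne : 1 - Complex.exp (-z) ≠ 0 := by
    intro h0
    have h1 : Complex.exp (-z) = 1 := (sub_eq_zero.mp h0).symm
    have h2 := congrArg norm h1
    rw [Complex.norm_exp, norm_one, Real.exp_eq_one_iff, Complex.neg_re, hzre] at h2
    linarith
  have hsum : ∑ j ∈ Finset.range (NN s m + 1), Complex.exp ((j : ℂ) * z) =
      Complex.exp (NN s m * z) * (1 - Complex.exp (-(((NN s m + 1 : ℕ) : ℂ) * z))) /
        (1 - Complex.exp (-z)) := by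
    rw [eq_div_iff hne]
    have h1 := geom_sum_mul (Complex.exp z) (NN s m + 1)
    have h2 : ∀ j : ℕ, Complex.exp ((j : ℂ) * z) = Complex.exp z ^ j := fun j =>
      Complex.exp_nat_mul z j
    simp_rw [Complex.exp_neg, h2]
    have h3 : Complex.exp z ≠ 0 := Complex.exp_ne_zero z
    have h4 : (1 - (Complex.exp z)⁻¹) = (Complex.exp z - 1) * (Complex.exp z)⁻¹ := by
      field_simp
    rw [h4, ← mul_assoc, h1, pow_succ]
    field_simp
  rw [hsum]
  ring

lemma GG_meas (s m : ℕ) : AEStronglyMeasurable (GG s m) volume := by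
  unfold GG
  refine AEStronglyMeasurable.indicator ?_ measurableSet_Ioc
  apply Continuous.aestronglyMeasurable
  unfold Phi gen
  fun_prop

lemma lim_int (s : ℕ) (hs : 1 ≤ s) :
    Tendsto (fun m => ∫ y, GG s m y) atTop
      (𝓝 ((Real.exp (-(s * Real.log 2 / 2)) * Real.sqrt (Real.pi / KK s) : ℝ) : ℂ)) := by
  have h := tendsto_integral_filter_of_dominated_convergence (μ := volume) (l := atTop)
    (F := fun m => GG s m)
    (f := fun y : ℝ => Complex.exp (-((KK s * y ^ 2 : ℝ) : ℂ) - s * Real.log 2 / 2))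
    (fun y => (2 * Real.exp (10 * s) * (3 * 7299072)) * (1 + y ^ 2)⁻¹)
    (Eventually.of_forall fun m => GG_meas s m)
    (by
      filter_upwards [good_eventually s hs] with m hm
      exact Eventually.of_forall fun y => GG_bound s m hs hm y)
    (integrable_inv_one_add_sq.const_mul _)
    (Eventually.of_forall fun y => lim_GG s hs y)
  have e : ∫ y : ℝ, Complex.exp (-((KK s * y ^ 2 : ℝ) : ℂ) - s * Real.log 2 / 2) =
      ((Real.exp (-(s * Real.log 2 / 2)) * Real.sqrt (Real.pi / KK s) : ℝ) : ℂ) := by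
    rw [← integral_gaussian, ← integral_const_mul, ← integral_complex_ofReal]
    congr 1
    ext y
    rw [← Real.exp_add]
    push_cast
    congr 1
    ring
  rw [e] at h
  exact h

lemma main_lim (s : ℕ) (hs : 1 ≤ s) : ∃ C : ℝ, 0 < C ∧
    Tendsto (fun m : ℕ => ({k : Fin s → ℕ | norm1Vec k ≤ NN s m}.ncard : ℝ) / 2 ^ m * Real.sqrt m)
      atTop (𝓝 C) := by
  set c : ℝ := s * Real.pi ^ 2 / (6 * Real.log 2) with hc
  have hc0 : 0 < c := by
    have := bet_pos s 1 hs le_rfl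
    simpa [bet] using this
  set J := Real.exp (-(s * Real.log 2 / 2)) * Real.sqrt (Real.pi / KK s) with hJ
  have hK : 0 < KK s := by
    unfold KK
    have hs' : (0 : ℝ) < s := by exact_mod_cast hs
    positivity
  have hJ0 : 0 < J := by positivity
  refine ⟨Real.sqrt c / (2 * Real.pi) * J, by positivity, ?_⟩
  have h1 := (Complex.continuous_re.tendsto _).comp (lim_int s hs)
  rw [Complex.ofReal_re] at h1
  have h2 := h1.const_mul (Real.sqrt c / (2 * Real.pi))
  refine h2.congr' ?_
  filter_upwards [eventually_ge_atTop 1] with m hm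
  have h3 := congrArg Complex.re (two_pi_count s m hs hm)
  rw [Complex.ofReal_re, Complex.re_ofReal_mul] at h3
  have hm' : (0 : ℝ) < m := by exact_mod_cast hm
  have h4 : bb s m * Real.sqrt m = Real.sqrt c := by
    unfold bb bet
    rw [← hc, Real.sqrt_div hc0.le]
    have : Real.sqrt m ≠ 0 := (Real.sqrt_pos.mpr hm').ne'
    field_simp
  simp only [Function.comp_apply]
  rw [← h4]
  calc bb s m * Real.sqrt m / (2 * Real.pi) * (∫ y, GG s m y).re
      = (bb s m * (∫ y, GG s m y).re) * Real.sqrt m / (2 * Real.pi) := by ring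
    _ = _ := by
      rw [← h3]
      field_simp

lemma ncard_pred (s m : ℕ) :
    ({k : Fin s → ℕ | k ≠ 0 ∧ (norm1Vec k : ℝ) ≤ lam * m ^ 2 / s}.ncard : ℝ) =
      ({k : Fin s → ℕ | norm1Vec k ≤ NN s m}.ncard : ℝ) - 1 := by
  have h0 : (0 : Fin s → ℕ) ∈ {k : Fin s → ℕ | norm1Vec k ≤ NN s m} := by
    simp [norm1Vec, norm1, bitFinset]
  have h1 : {k : Fin s → ℕ | k ≠ 0 ∧ (norm1Vec k : ℝ) ≤ lam * m ^ 2 / s} =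
      {k : Fin s → ℕ | norm1Vec k ≤ NN s m} \ {0} := by
    ext k
    have : (norm1Vec k : ℝ) ≤ lam * m ^ 2 / s ↔ norm1Vec k ≤ NN s m :=
      (Nat.le_floor_iff (xx_nonneg s m)).symm
    simp only [Set.mem_ofPred_eq, Set.mem_sdiff, Set.mem_singleton_iff, this]
    tauto
  have hpos : 1 ≤ {k : Fin s → ℕ | norm1Vec k ≤ NN s m}.ncard := by
    rw [ncard_eq s _ _ le_rfl]
    apply Finset.card_pos.mpr
    exact ⟨fun _ => ∅, Finset.mem_filter.mpr ⟨Fintype.mem_piFinset.mpr fun _ => Finset.empty_mem_powerset _, by simp [pnorm]⟩⟩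
  rw [h1, Set.ncard_sdiff_singleton_of_mem h0, Nat.cast_sub hpos, Nat.cast_one]

lemma tendsto_sqrt_div : Tendsto (fun m : ℕ => 1 / (2 : ℝ) ^ m * Real.sqrt m) atTop (𝓝 0) := by
  have h := tendsto_pow_const_div_const_pow_of_one_lt 1 (one_lt_two : (1 : ℝ) < 2)
  refine squeeze_zero (fun m => by positivity) (fun m => ?_) h
  rw [pow_one, div_mul_eq_mul_div, one_mul]
  gcongr
  rcases Nat.eq_zero_or_pos m with rfl | hm
  · simp
  · have hm' : (1 : ℝ) ≤ m := by exact_mod_cast hm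
    rw [Real.sqrt_le_left (by linarith)]
    nlinarith
end MedianQMC

namespace MedianQMC

/-- with `λ = 3log(2)²/π²`, the number of `𝐤 ∈ ℕ₀^s ∖ {0}` with
`‖𝛋‖₁ ≤ λm²/s` is `∼ C·2^m/√m` for some constant `C > 0` depending on `s`. -/
theorem count_le_asymptotic (s : ℕ) (hs : 1 ≤ s) :
    ∃ C : ℝ, 0 < C ∧
      Filter.Tendsto
        (fun m : ℕ => ({k : Fin s → ℕ | k ≠ 0 ∧ (norm1Vec k : ℝ) ≤ lam * m ^ 2 / s}.ncard : ℝ) /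
          (C * 2 ^ m / Real.sqrt m))
        Filter.atTop (nhds 1) := by
  obtain ⟨C, hC, h⟩ := main_lim s hs
  refine ⟨C, hC, ?_⟩
  have h1 := (h.sub tendsto_sqrt_div).div_const C
  rw [sub_zero, div_self hC.ne'] at h1
  refine h1.congr fun m => ?_
  rw [ncard_pred, div_div_eq_mul_div, ← sub_mul, ← sub_div]
  have h2 : (2 : ℝ) ^ m ≠ 0 := by positivity
  field_simp

end MedianQMC
end

section
/- For all integers N ≥ 1 and s ≥ 1, |{𝐤 ∈ ℕ₀^s ∖ {0} : ‖𝛋‖₁ ≤ N}| < exp(π√(s(N+1)/3)). -/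
open MeasureTheory ProbabilityTheory
open scoped ENNReal

namespace MedianQMC

lemma mem_bitFinset' (k i : ℕ) : i ∈ bitFinset k ↔ k.testBit i = true := by
  unfold bitFinset
  simp only [Finset.mem_filter, Finset.mem_range, and_iff_right_iff_imp]
  intro h
  have h1 := Nat.ge_two_pow_of_testBit h
  have h2 : i < 2 ^ i := Nat.lt_two_pow_self
  omega

lemma norm1_add (M k : ℕ) (hk : k < 2 ^ M) : norm1 (2 ^ M + k) = norm1 k + (M + 1) := by
  have hM : M ∉ bitFinset k := by
    rw [mem_bitFinset', Nat.testBit_lt_two_pow hk]; simp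
  have : bitFinset (2 ^ M + k) = insert M (bitFinset k) := by
    ext i
    rw [Finset.mem_insert, mem_bitFinset', mem_bitFinset']
    rcases lt_trichotomy i M with h | h | h
    · rw [Nat.testBit_two_pow_add_gt h]
      simp [h.ne]
    · subst h
      rw [Nat.testBit_two_pow_add_eq, Nat.testBit_lt_two_pow hk]
      simp
    · have h3 : 2 ^ (M + 1) ≤ 2 ^ i := Nat.pow_le_pow_right (by norm_num) h
      have h4 : 2 ^ M + k < 2 ^ i := by rw [pow_succ] at h3; omega
      rw [Nat.testBit_lt_two_pow h4, Nat.testBit_lt_two_pow (by omega : k < 2 ^ i)]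
      simp [h.ne']
  unfold norm1
  rw [this, Finset.sum_insert hM]; ring

lemma genfun (q : ℝ) (M : ℕ) :
    ∑ k ∈ Finset.range (2 ^ M), q ^ norm1 k = ∏ i ∈ Finset.range M, (1 + q ^ (i + 1)) := by
  induction M with
  | zero => simp [norm1, bitFinset]
  | succ M ih =>
    rw [pow_succ, mul_two, Finset.sum_range_add, Finset.prod_range_succ, ← ih, mul_add, mul_one,
      Finset.sum_mul]
    congr 1
    apply Finset.sum_congr rfl
    intro k hk
    rw [norm1_add M k (Finset.mem_range.1 hk), pow_add]

lemma lt_of_norm1_le (k N : ℕ) (h : norm1 k ≤ N) : k < 2 ^ N := by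
  by_contra! hc
  obtain ⟨i, hi, hb⟩ := Nat.exists_ge_and_testBit_of_ge_two_pow hc
  have : i + 1 ≤ norm1 k :=
    Finset.single_le_sum (f := fun i => i + 1) (fun _ _ => Nat.zero_le _) ((mem_bitFinset' k i).2 hb)
  omega

lemma euler_fin (q : ℝ) (M : ℕ) :
    (∏ i ∈ Finset.range M, (1 + q ^ (i + 1))) * (∏ i ∈ Finset.range M, (1 - q ^ (2 * i + 1))) *
      (∏ i ∈ Finset.range M, (1 - q ^ (i + 1))) = ∏ i ∈ Finset.range (2 * M), (1 - q ^ (i + 1)) := by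
  induction M with
  | zero => simp
  | succ M ih =>
    rw [show 2 * (M + 1) = 2 * M + 1 + 1 by ring]
    simp only [Finset.prod_range_succ]
    rw [← ih]
    ring

lemma euler_le (q : ℝ) (h0 : 0 < q) (h1 : q < 1) (M : ℕ) :
    (∏ i ∈ Finset.range M, (1 + q ^ (i + 1))) * (∏ i ∈ Finset.range M, (1 - q ^ (2 * i + 1))) ≤ 1 := by
  have hp : ∀ n : ℕ, 0 < 1 - q ^ (n + 1) := fun n =>
    sub_pos.2 (pow_lt_one₀ h0.le h1 (by omega))
  have hpos : 0 < ∏ i ∈ Finset.range M, (1 - q ^ (i + 1)) := Finset.prod_pos fun i _ => hp i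
  have h := euler_fin q M
  rw [two_mul, Finset.prod_range_add, mul_comm _ (∏ i ∈ Finset.range M, (1 - q ^ (i + 1)))] at h
  rw [mul_left_cancel₀ hpos.ne' h]
  apply Finset.prod_le_one
  · intro i _; exact (hp _).le
  · intro i _
    have := pow_pos h0 (M + i + 1)
    linarith

lemma geo_le (y : ℝ) (hy : 0 < y) (M : ℕ) :
    ∑ l ∈ Finset.range M, Real.exp (-y) ^ (2 * l + 1) ≤ 1 / (2 * y) := by
  set x := Real.exp (-y) with hx
  have hx0 : 0 < x := Real.exp_pos _
  have hx1 : x < 1 := by rw [hx, Real.exp_lt_one_iff]; linarith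
  have hg : (∑ l ∈ Finset.range M, x ^ (2 * l + 1)) * (1 - x ^ 2) = x * (1 - x ^ (2 * M)) := by
    induction M with
    | zero => simp
    | succ M ih => rw [Finset.sum_range_succ, add_mul, ih]; ring
  have hs : y ≤ Real.sinh y := Real.self_le_sinh_iff.2 hy.le
  rw [Real.sinh_eq, ← hx] at hs
  have hxe : Real.exp y * x = 1 := by rw [hx, ← Real.exp_add]; simp
  have h2 : 2 * y * x ≤ 1 - x ^ 2 := by nlinarith
  have h3 : 0 < 1 - x ^ 2 := by nlinarith
  have h4 : 0 < x ^ (2 * M) := by positivity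
  rw [le_div_iff₀ (by positivity)]
  have h5 : (∑ l ∈ Finset.range M, x ^ (2 * l + 1)) * (1 - x ^ 2) ≤ x := by
    rw [hg]; nlinarith
  have h6 : (∑ l ∈ Finset.range M, x ^ (2 * l + 1)) * (2 * y) * (1 - x ^ 2) ≤ 1 * (1 - x ^ 2) := by
    nlinarith
  exact le_of_mul_le_mul_right h6 h3

lemma log_le (t : ℝ) (ht : 0 < t) (M : ℕ) :
    ∑ l ∈ Finset.range M, -Real.log (1 - Real.exp (-t) ^ (2 * l + 1)) ≤ Real.pi ^ 2 / (12 * t) := by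
  have hx1 : Real.exp (-t) < 1 := by rw [Real.exp_lt_one_iff]; linarith
  have hx0 := Real.exp_pos (-t)
  have h1 : HasSum (fun n : ℕ => ∑ l ∈ Finset.range M,
      (Real.exp (-t) ^ (2 * l + 1)) ^ (n + 1) / ((n : ℝ) + 1))
      (∑ l ∈ Finset.range M, -Real.log (1 - Real.exp (-t) ^ (2 * l + 1))) := by
    apply hasSum_sum
    intro l _
    apply Real.hasSum_pow_div_log_of_abs_lt_one
    rw [abs_of_pos (by positivity)]
    exact pow_lt_one₀ hx0.le hx1 (by omega)
  have h2 : HasSum (fun n : ℕ => 1 / (2 * t) * (1 / ((n : ℝ) + 1) ^ 2)) (1 / (2 * t) * (Real.pi ^ 2 / 6)) := by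
    apply HasSum.mul_left
    have := (hasSum_nat_add_iff' 1).2 hasSum_zeta_two
    simpa using this
  have h3 := hasSum_le (fun n => ?_) h1 h2
  · refine h3.trans_eq ?_
    field_simp; norm_num
  · rw [← Finset.sum_div, div_le_iff₀ (by positivity)]
    have := geo_le (t * (n + 1)) (by positivity) M
    refine (le_of_eq ?_).trans (this.trans_eq ?_)
    · apply Finset.sum_congr rfl
      intro l _
      rw [pow_right_comm, ← Real.exp_nat_mul (-t) (n + 1)]
      congr 2
      push_cast; ring
    · field_simp

lemma prod_le (t : ℝ) (ht : 0 < t) (M : ℕ) :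
    ∏ i ∈ Finset.range M, (1 + Real.exp (-t) ^ (i + 1)) ≤ Real.exp (Real.pi ^ 2 / (12 * t)) := by
  have hx1 : Real.exp (-t) < 1 := by rw [Real.exp_lt_one_iff]; linarith
  have hx0 := Real.exp_pos (-t)
  have h := euler_le _ hx0 hx1 M
  have hp : ∀ n : ℕ, 0 < 1 - Real.exp (-t) ^ (2 * n + 1) := fun n =>
    sub_pos.2 (pow_lt_one₀ hx0.le hx1 (by omega))
  have hpos : 0 < ∏ i ∈ Finset.range M, (1 - Real.exp (-t) ^ (2 * i + 1)) :=
    Finset.prod_pos fun i _ => hp i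
  have h2 := Real.exp_le_exp.2 (log_le t ht M)
  rw [Finset.sum_neg_distrib, ← Real.log_prod (fun i _ => (hp i).ne'), Real.exp_neg,
    Real.exp_log hpos] at h2
  refine le_trans ?_ h2
  rw [← one_div, le_div_iff₀ hpos]
  exact h

lemma count_le (N s : ℕ) (t : ℝ) (ht : 0 < t) :
    ({k : Fin s → ℕ | k ≠ 0 ∧ norm1Vec k ≤ N}.ncard : ℝ) ≤
      Real.exp (t * N + s * (Real.pi ^ 2 / (12 * t))) := by
  classical
  set q := Real.exp (-t) with hq
  have hx1 : q < 1 := by rw [hq, Real.exp_lt_one_iff]; linarith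
  have hx0 : 0 < q := Real.exp_pos (-t)
  set P := Fintype.piFinset (fun _ : Fin s => Finset.range (2 ^ N))
  set F := P.filter (fun k => norm1Vec k ≤ N)
  have hsub : {k : Fin s → ℕ | k ≠ 0 ∧ norm1Vec k ≤ N} ⊆ (F : Set (Fin s → ℕ)) := by
    rintro k ⟨-, hk⟩
    simp only [F, P, Finset.coe_filter, Fintype.mem_piFinset, Finset.mem_range, Set.mem_setOf_eq]
    refine ⟨fun j => lt_of_norm1_le _ _ (le_trans ?_ hk), hk⟩
    exact Finset.single_le_sum (f := fun j => norm1 (k j)) (fun _ _ => Nat.zero_le _)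
      (Finset.mem_univ j)
  have hc : ({k : Fin s → ℕ | k ≠ 0 ∧ norm1Vec k ≤ N}.ncard : ℝ) ≤ F.card := by
    have := Set.ncard_le_ncard hsub F.finite_toSet
    rw [Set.ncard_coe_finset] at this
    exact_mod_cast this
  have h1 : (F.card : ℝ) * q ^ N ≤ ∑ k ∈ P, ∏ j, q ^ norm1 (k j) := by
    calc (F.card : ℝ) * q ^ N = ∑ k ∈ F, q ^ N := by simp
      _ ≤ ∑ k ∈ F, ∏ j, q ^ norm1 (k j) := by
        apply Finset.sum_le_sum
        intro k hk
        rw [Finset.prod_pow_eq_pow_sum]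
        exact pow_le_pow_of_le_one hx0.le hx1.le (Finset.mem_filter.1 hk).2
      _ ≤ _ := by
        apply Finset.sum_le_sum_of_subset_of_nonneg (Finset.filter_subset _ _)
        intros; positivity
  have h2 : ∑ k ∈ P, ∏ j, q ^ norm1 (k j) = (∏ i ∈ Finset.range N, (1 + q ^ (i + 1))) ^ s := by
    rw [← genfun, ← Finset.prod_univ_sum (fun _ : Fin s => Finset.range (2 ^ N))
      (fun _ k => q ^ norm1 k)]
    simp
  have h3 : (∏ i ∈ Finset.range N, (1 + q ^ (i + 1))) ^ s ≤
      Real.exp (s * (Real.pi ^ 2 / (12 * t))) := by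
    rw [Real.exp_nat_mul]
    exact pow_le_pow_left₀ (Finset.prod_nonneg fun i _ => by positivity) (prod_le t ht N) s
  have h4 : Real.exp (t * N) * q ^ N = 1 := by
    rw [hq, ← Real.exp_nat_mul, ← Real.exp_add]
    simp; ring
  refine hc.trans ?_
  have h5 : 0 < q ^ N := by positivity
  refine le_of_mul_le_mul_right ?_ h5
  rw [Real.exp_add, mul_right_comm, h4, one_mul]
  exact h1.trans (h2.le.trans h3)

/-- finite-`N` bound on the number of `𝐤 ∈ ℕ₀^s ∖ {0}` with `‖𝛋‖₁ ≤ N`. -/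
theorem count_le_lt (N s : ℕ) (hN : 1 ≤ N) (hs : 1 ≤ s) :
    ({k : Fin s → ℕ | k ≠ 0 ∧ norm1Vec k ≤ N}.ncard : ℝ) <
      Real.exp (Real.pi * Real.sqrt (s * (N + 1) / 3)) := by
  have hs' : (0 : ℝ) < s := by exact_mod_cast hs
  have hpi := Real.pi_pos
  set r := Real.sqrt (s * (N + 1) / 3) with hr
  have hr0 : 0 < r := Real.sqrt_pos.2 (by positivity)
  have hr2 : r ^ 2 = s * (N + 1) / 3 := Real.sq_sqrt (by positivity)
  have ht : 0 < Real.pi * r / (2 * (N + 1)) := by positivity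
  refine (count_le N s _ ht).trans_lt (Real.exp_lt_exp.2 ?_)
  have e1 : (s : ℝ) * (Real.pi ^ 2 / (12 * (Real.pi * r / (2 * (N + 1))))) = Real.pi * r / 2 := by
    field_simp
    rw [hr2]; ring
  have e2 : Real.pi * r / (2 * (N + 1)) * (N + 1 : ℝ) = Real.pi * r / 2 := by
    field_simp
  rw [e1]
  linarith

end MedianQMC
end
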